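/- arXiv:1105.1084 — 4 statements merged into one kernel-verified Lean document; each statement's English description precedes it below -/
import Mathlib

section
/- Let n ≥ 1 and let 𝔏(ℝⁿ) denote the convex set of all POVMs M on (ℝⁿ, ℬ(ℝⁿ)) acting on L²(ℝⁿ) that are covariant under position translations (U(q)M(B)U(q)* = M(B+q)) and invariant under momentum boosts (V(p)M(B)V(p)* = M(B)). Then M ∈ 𝔏(ℝⁿ) is an extreme point of 𝔏(ℝⁿ) if and only if there exists q ∈ ℝⁿ such that M(B) is multiplication by the indicator function χ_{B−q} for every Borel B ⊆ ℝⁿ, i.e. M is a translated canonical position observable M_q(B) = M_κ(B − q). In particular, all extreme points of 𝔏(ℝⁿ) are projection valued measures. -/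
open scoped Classical

open MeasureTheory Set
open scoped ComplexConjugate

local notation "⟪" x ", " y "⟫" => @inner ℂ _ _ x y

/-- A normalized positive operator valued measure (POVM). -/
structure POVM (Ω : Type*) [MeasurableSpace Ω] (H : Type*) [NormedAddCommGroup H]
    [InnerProductSpace ℂ H] [CompleteSpace H] where
  toFun : Set Ω → (H →L[ℂ] H)
  isPositive : ∀ B : Set Ω, MeasurableSet B → (toFun B).IsPositive
  normalized : toFun Set.univ = 1
  m_iUnion : ∀ B : ℕ → Set Ω, (∀ k, MeasurableSet (B k)) →
    Pairwise (Function.onFun Disjoint B) → ∀ φ ψ : H,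
      HasSum (fun k => ⟪φ, toFun (B k) ψ⟫) ⟪φ, toFun (⋃ k, B k) ψ⟫

/-- `L²(ℝⁿ)`. -/
noncomputable abbrev L2Rn (n : ℕ) : Type := Lp ℂ 2 (volume : Measure (Fin n → ℝ))

/-- Covariance under position translations: `U(q) M(B) U(q)* = M(B + q)`. -/
def TransCovariant (n : ℕ) (U : (Fin n → ℝ) → (L2Rn n ≃ₗᵢ[ℂ] L2Rn n))
    (M : POVM (Fin n → ℝ) (L2Rn n)) : Prop :=
  ∀ q : Fin n → ℝ, ∀ B : Set (Fin n → ℝ), MeasurableSet B →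
    ∀ φ ψ : L2Rn n,
      ⟪(U q φ : L2Rn n), M.toFun ((fun x => x + q) '' B) (U q ψ)⟫ = ⟪φ, M.toFun B ψ⟫

/-- Invariance under momentum boosts: `V(p) M(B) V(p)* = M(B)`. -/
def BoostInvariant (n : ℕ) (V : (Fin n → ℝ) → (L2Rn n ≃ₗᵢ[ℂ] L2Rn n))
    (M : POVM (Fin n → ℝ) (L2Rn n)) : Prop :=
  ∀ p : Fin n → ℝ, ∀ B : Set (Fin n → ℝ), MeasurableSet B →
    ∀ φ ψ : L2Rn n,
      ⟪(V p φ : L2Rn n), M.toFun B (V p ψ)⟫ = ⟪φ, M.toFun B ψ⟫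


/-- `M` is an extreme point of the convex set `𝔏(ℝⁿ)` of translation-covariant,
boost-invariant POVMs. -/
def IsExtremeInL (n : ℕ)
    (U V : (Fin n → ℝ) → (L2Rn n ≃ₗᵢ[ℂ] L2Rn n))
    (M : POVM (Fin n → ℝ) (L2Rn n)) : Prop :=
  ∀ M₁ M₂ : POVM (Fin n → ℝ) (L2Rn n),
    TransCovariant n U M₁ → BoostInvariant n V M₁ →
    TransCovariant n U M₂ → BoostInvariant n V M₂ →
    ∀ t : ℝ, 0 < t → t < 1 →
    (∀ B : Set (Fin n → ℝ), MeasurableSet B →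
      M.toFun B = (t : ℂ) • M₁.toFun B + ((1 - t : ℝ) : ℂ) • M₂.toFun B) →
    ∀ B : Set (Fin n → ℝ), MeasurableSet B →
      M₁.toFun B = M.toFun B ∧ M₂.toFun B = M.toFun B

section partA
variable {Ω : Type*} [MeasurableSpace Ω] {H : Type*} [NormedAddCommGroup H]
    [InnerProductSpace ℂ H] [CompleteSpace H]

lemma povm_empty (M : POVM Ω H) : M.toFun ∅ = 0 := by
  ext ψ
  refine ext_inner_left ℂ fun φ => ?_
  have h := M.m_iUnion (fun _ => ∅) (fun _ => MeasurableSet.empty)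
    (fun i j _ => by simp [Function.onFun]) φ ψ
  have := h.summable
  rw [summable_const_iff] at this
  simpa using this

lemma povm_compl (M : POVM Ω H) {B : Set Ω} (hB : MeasurableSet B) :
    M.toFun B + M.toFun Bᶜ = 1 := by
  ext ψ
  refine ext_inner_left ℂ fun φ => ?_
  let S : ℕ → Set Ω := fun k => if k = 0 then B else if k = 1 then Bᶜ else ∅
  have hS0 : S 0 = B := by simp [S]
  have hS1 : S 1 = Bᶜ := by simp [S]
  have hS2 : ∀ k, k ∉ Finset.range 2 → S k = ∅ := by
    intro k hk
    simp only [Finset.mem_range, not_lt] at hk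
    simp only [S]
    rw [if_neg (by omega), if_neg (by omega)]
  have hU : (⋃ k, S k) = univ := by
    apply eq_univ_of_forall
    intro x
    by_cases hx : x ∈ B
    · exact mem_iUnion.2 ⟨0, by rw [hS0]; exact hx⟩
    · exact mem_iUnion.2 ⟨1, by rw [hS1]; exact hx⟩
  have h := M.m_iUnion S
    (fun k => by simp only [S]; split_ifs; exacts [hB, hB.compl, MeasurableSet.empty])
    (fun i j hij => by
      simp only [Function.onFun, S]
      split_ifs <;> simp_all [disjoint_compl_right, disjoint_compl_left]) φ ψ
  have h2 : HasSum (fun k => ⟪φ, M.toFun (S k) ψ⟫)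
      (∑ k ∈ Finset.range 2, ⟪φ, M.toFun (S k) ψ⟫) := by
    apply hasSum_sum_of_ne_finset_zero
    intro k hk
    rw [hS2 k hk, povm_empty]; simp
  have h3 := h.unique h2
  rw [hU, M.normalized, Finset.sum_range_succ, Finset.sum_range_one, hS0, hS1] at h3
  simp only [ContinuousLinearMap.add_apply, inner_add_right]
  exact h3.symm

lemma pos_ker {A : H →L[ℂ] H} (hA : A.IsPositive) {φ : H} (h : (⟪φ, A φ⟫).re = 0) : A φ = 0 := by
  set ψ := A φ with hψ
  set c := (⟪ψ, A ψ⟫).re with hc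
  have hc0 : 0 ≤ c := hA.re_inner_nonneg_right ψ
  set a := ‖ψ‖ ^ 2 with ha
  have hψψ : (⟪ψ, ψ⟫).re = a := by
    rw [ha]; exact inner_self_eq_norm_sq (𝕜 := ℂ) ψ
  have key : ∀ s : ℝ, 0 ≤ -2 * s * a + s ^ 2 * c := by
    intro s
    have h1 : 0 ≤ (⟪φ - (s : ℂ) • ψ, A (φ - (s : ℂ) • ψ)⟫).re := hA.re_inner_nonneg_right _
    have h2 : ⟪φ, A ψ⟫ = ⟪ψ, ψ⟫ := (hA.inner_left_eq_inner_right φ ψ).symm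
    rw [map_sub, map_smul, inner_sub_left, inner_sub_right, inner_sub_right, inner_smul_left,
      inner_smul_left, inner_smul_right, inner_smul_right, h2, ← hψ] at h1
    simp only [Complex.sub_re, Complex.re_ofReal_mul, Complex.conj_ofReal, h, hψψ, ← hc] at h1
    nlinarith
  have h1 := key (a / (c + 1))
  have h2 : a = 0 := by
    have hc1 : 0 < c + 1 := by linarith
    have h3 : -2 * (a / (c + 1)) * a + (a / (c + 1)) ^ 2 * c
      = -(a ^ 2 * (c + 2)) / (c + 1) ^ 2 := by
      field_simp; ring
    rw [h3] at h1
    have h4 : 0 ≤ -(a ^ 2 * (c + 2)) := by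
      by_contra hh
      push Not at hh
      have := div_neg_of_neg_of_pos hh (by positivity : 0 < (c + 1) ^ 2)
      linarith
    have : a ^ 2 = 0 := by nlinarith [sq_nonneg a]
    exact pow_eq_zero_iff (two_ne_zero) |>.1 this
  rw [ha] at h2
  simpa using h2

lemma proj_extreme (M M₁ M₂ : POVM Ω H) {B : Set Ω} (hB : MeasurableSet B)
    (hP : ∀ φ, M.toFun B (M.toFun B φ) = M.toFun B φ) {t : ℝ} (t0 : 0 < t) (t1 : t < 1)
    (h : ∀ B : Set Ω, MeasurableSet B →
      M.toFun B = (t : ℂ) • M₁.toFun B + ((1 - t : ℝ) : ℂ) • M₂.toFun B) :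
    M₁.toFun B = M.toFun B := by
  have ker : ∀ B : Set Ω, MeasurableSet B → ∀ φ, M.toFun B φ = 0 → M₁.toFun B φ = 0 := by
    intro B hB φ hφ
    apply pos_ker (M₁.isPositive B hB)
    have h1 : 0 ≤ (⟪φ, M₁.toFun B φ⟫).re := (M₁.isPositive B hB).re_inner_nonneg_right _
    have h2 : 0 ≤ (⟪φ, M₂.toFun B φ⟫).re := (M₂.isPositive B hB).re_inner_nonneg_right _
    have h3 : (⟪φ, M.toFun B φ⟫).re = 0 := by rw [hφ]; simp
    rw [h B hB, ContinuousLinearMap.add_apply, ContinuousLinearMap.smul_apply,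
      ContinuousLinearMap.smul_apply, inner_add_right, inner_smul_right, inner_smul_right,
      Complex.add_re, Complex.re_ofReal_mul, Complex.re_ofReal_mul] at h3
    nlinarith [mul_nonneg (sub_pos.2 t1).le h2, mul_nonneg t0.le h1]
  have hc := povm_compl M hB
  have hc1 := povm_compl M₁ hB
  ext φ
  have e1 : M.toFun B φ + M.toFun Bᶜ φ = φ := by
    simpa using congrArg (fun T => T φ) hc
  have e2 : M.toFun Bᶜ (M.toFun B φ) = 0 := by
    have := congrArg (fun T => T (M.toFun B φ)) hc
    simpa [hP φ] using this
  have e3 : M.toFun B (M.toFun Bᶜ φ) = 0 := by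
    have := congrArg (M.toFun B) e1
    simpa [hP φ] using this
  have e4 := ker _ hB.compl _ e2
  have e5 := ker _ hB _ e3
  have e6 : M₁.toFun B (M.toFun B φ) = M.toFun B φ := by
    have := congrArg (fun T => T (M.toFun B φ)) hc1
    simpa [e4] using this
  calc M₁.toFun B φ = M₁.toFun B (M.toFun B φ + M.toFun Bᶜ φ) := by rw [e1]
    _ = _ := by rw [map_add, e5, e6, add_zero]

end partA


section partB
open ENNReal

lemma fourier_real {E : Type*} [NormedAddCommGroup E] [NormedSpace ℝ E] [MeasurableSpace E]
    [BorelSpace E] [SecondCountableTopology E] [CompleteSpace E] (μ : Measure E) [SigmaFinite μ]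
    (g : E → ℝ) (hg : Integrable g μ)
    (h : ∀ L : StrongDual ℝ E, ∫ x, Complex.exp (L x * Complex.I) * (g x : ℂ) ∂μ = 0) :
    g =ᵐ[μ] 0 := by
  have hgm : AEMeasurable g μ := hg.aemeasurable
  have hp : AEMeasurable (fun x => ENNReal.ofReal (g x)) μ := hgm.ennreal_ofReal
  have hm : AEMeasurable (fun x => ENNReal.ofReal (-g x)) μ := hgm.neg.ennreal_ofReal
  have fp : ∫⁻ x, ENNReal.ofReal (g x) ∂μ ≠ ⊤ := hg.lintegral_lt_top.ne
  have fm : ∫⁻ x, ENNReal.ofReal (-g x) ∂μ ≠ ⊤ := hg.neg.lintegral_lt_top.ne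
  have := isFiniteMeasure_withDensity fp
  have := isFiniteMeasure_withDensity fm
  have hpos : Integrable (fun x => (max (g x) 0 : ℝ)) μ := hg.pos_part
  have hneg : Integrable (fun x => (max (-g x) 0 : ℝ)) μ := hg.neg_part
  have mulint : ∀ (L : StrongDual ℝ E) (f : E → ℝ), Integrable f μ →
      Integrable (fun x => Complex.exp (L x * Complex.I) * (f x : ℂ)) μ := by
    intro L f hf
    refine hf.ofReal.bdd_mul (c := 1) ?_ ?_
    · exact (Continuous.aestronglyMeasurable (by fun_prop))
    · exact Filter.Eventually.of_forall fun x => by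
        rw [Complex.norm_exp_ofReal_mul_I]
  have key : μ.withDensity (fun x => ENNReal.ofReal (g x))
      = μ.withDensity (fun x => ENNReal.ofReal (-g x)) := by
    apply Measure.ext_of_charFunDual
    ext L
    rw [charFunDual_apply, charFunDual_apply,
      integral_withDensity_eq_integral_toReal_smul₀ hp (by simp),
      integral_withDensity_eq_integral_toReal_smul₀ hm (by simp), ← sub_eq_zero]
    rw [← h L]
    have e1 : ∀ f : E → ℝ, (fun x => (ENNReal.ofReal (f x)).toReal • Complex.exp (L x * Complex.I))
        = fun x => Complex.exp (L x * Complex.I) * ((max (f x) 0 : ℝ) : ℂ) := by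
      intro f; ext x
      rw [ENNReal.toReal_ofReal', Complex.real_smul, mul_comm]
    rw [e1 g, e1 (fun x => -g x), ← integral_sub (mulint L _ hpos) (mulint L _ hneg)]
    congr 1; ext x
    rw [← mul_sub, ← Complex.ofReal_sub]
    congr 2
    rcases le_total (g x) 0 with h0 | h0
    · rw [max_eq_right h0, max_eq_left (by linarith)]; ring
    · rw [max_eq_left h0, max_eq_right (by linarith)]; ring
  rw [withDensity_eq_iff hp hm fp] at key
  filter_upwards [key] with x hx
  rcases le_total (g x) 0 with h0 | h0
  · rw [ENNReal.ofReal_of_nonpos h0] at hx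
    have := ENNReal.ofReal_eq_zero.1 hx.symm
    simp only [Pi.zero_apply]; linarith
  · rw [ENNReal.ofReal_of_nonpos (p := -g x) (by linarith)] at hx
    have := ENNReal.ofReal_eq_zero.1 hx
    simp only [Pi.zero_apply]; linarith

lemma fourier_complex {n : ℕ} (g : (Fin n → ℝ) → ℂ) (hg : Integrable g)
    (h : ∀ p : Fin n → ℝ, ∫ x, Complex.exp (Complex.I * (∑ k, p k * x k : ℝ)) * g x = 0) :
    g =ᵐ[volume] 0 := by
  have hL : ∀ L : StrongDual ℝ (Fin n → ℝ), ∃ p : Fin n → ℝ, ∀ x, L x = ∑ k, p k * x k := by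
    intro L
    refine ⟨fun k => L (Pi.single k 1), fun x => ?_⟩
    have : L x = L (∑ k, x k • Pi.single k (1 : ℝ)) := by
      congr 1
      exact pi_eq_sum_univ' x
    rw [this, map_sum]
    simp [mul_comm]
  have h1 : ∀ L : StrongDual ℝ (Fin n → ℝ), ∫ x, Complex.exp (L x * Complex.I) * g x = 0 := by
    intro L
    obtain ⟨p, hp⟩ := hL L
    rw [← h p]
    congr 1; ext x
    rw [hp x, mul_comm Complex.I]
  have h2 : ∀ L : StrongDual ℝ (Fin n → ℝ), ∫ x, Complex.exp (L x * Complex.I) * conj (g x) = 0 := by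
    intro L
    have := congrArg conj (h1 (-L))
    rw [← integral_conj, map_zero] at this
    rw [← this]
    congr 1; ext x
    rw [map_mul, ← Complex.exp_conj]
    simp
  have mulint : ∀ (L : StrongDual ℝ (Fin n → ℝ)) (f : (Fin n → ℝ) → ℂ), Integrable f →
      Integrable (fun x => Complex.exp (L x * Complex.I) * f x) := by
    intro L f hf
    refine hf.bdd_mul (c := 1) ?_ ?_
    · exact (Continuous.aestronglyMeasurable (by fun_prop))
    · exact Filter.Eventually.of_forall fun x => by
        rw [Complex.norm_exp_ofReal_mul_I]
  have hgc : Integrable (fun x => conj (g x)) := by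
    simpa using (Complex.conjCLE : ℂ →L[ℝ] ℂ).integrable_comp hg
  have hre := fourier_real volume (fun x => (g x).re) hg.re (fun L => by
    have : (fun x => Complex.exp (L x * Complex.I) * ((g x).re : ℂ))
      = fun x => (Complex.exp (L x * Complex.I) * g x
        + Complex.exp (L x * Complex.I) * conj (g x)) / 2 := by
      ext x
      rw [← mul_add, Complex.add_conj]; push_cast; ring
    rw [this, integral_div, integral_add (mulint L _ hg) (mulint L _ hgc), h1, h2]; simp)
  have him := fourier_real volume (fun x => (g x).im) hg.im (fun L => by
    have : (fun x => Complex.exp (L x * Complex.I) * ((g x).im : ℂ))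
      = fun x => (Complex.exp (L x * Complex.I) * g x
        - Complex.exp (L x * Complex.I) * conj (g x)) / (2 * Complex.I) := by
      ext x
      rw [← mul_sub, Complex.sub_conj]; push_cast
      field_simp
    rw [this, integral_div, integral_sub (mulint L _ hg) (mulint L _ hgc), h1, h2]; simp)
  filter_upwards [hre, him] with x h1 h2
  exact Complex.ext h1 h2

lemma boost_mul {n : ℕ} (V : (Fin n → ℝ) → (L2Rn n ≃ₗᵢ[ℂ] L2Rn n))
    (hV : ∀ p : Fin n → ℝ, ∀ φ : L2Rn n,
      (V p φ : (Fin n → ℝ) → ℂ) =ᵐ[volume]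
        fun x => Complex.exp (Complex.I * (∑ k, p k * x k)) * φ x)
    (A : L2Rn n →L[ℂ] L2Rn n) (hA : A.IsPositive)
    (hinv : ∀ p, ∀ φ ψ : L2Rn n, ⟪(V p φ : L2Rn n), A (V p ψ)⟫ = ⟪φ, A ψ⟫) (φ ψ : L2Rn n) :
    (fun x => conj (A φ x) * ψ x) =ᵐ[volume] fun x => conj (φ x) * A ψ x := by
  have i1 : Integrable (fun x => conj (A φ x) * ψ x) := by
    have := L2.integrable_inner (𝕜 := ℂ) (A φ) ψ
    simpa [RCLike.inner_apply, mul_comm] using this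
  have i2 : Integrable (fun x => conj (φ x) * A ψ x) := by
    have := L2.integrable_inner (𝕜 := ℂ) φ (A ψ)
    simpa [RCLike.inner_apply, mul_comm] using this
  have key := fourier_complex (fun x => conj (A φ x) * ψ x - conj (φ x) * A ψ x) (i1.sub i2) (by
    intro p
    have e1 : ⟪A φ, V p ψ⟫ = ⟪φ, V p (A ψ)⟫ := by
      have := hinv p ((V p).symm φ) ψ
      rw [LinearIsometryEquiv.apply_symm_apply] at this
      rw [hA.inner_left_eq_inner_right, this, ← LinearIsometryEquiv.inner_map_map (V p),
        LinearIsometryEquiv.apply_symm_apply]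
    rw [L2.inner_def, L2.inner_def] at e1
    have mulint : ∀ (f : (Fin n → ℝ) → ℂ), Integrable f →
        Integrable (fun x => Complex.exp (Complex.I * (∑ k, p k * x k : ℝ)) * f x) := by
      intro f hf
      refine hf.bdd_mul (c := 1) ?_ ?_
      · exact (Continuous.aestronglyMeasurable (by fun_prop))
      · exact Filter.Eventually.of_forall fun x => by
          rw [mul_comm, Complex.norm_exp_ofReal_mul_I]
    simp_rw [mul_sub]
    rw [integral_sub (mulint _ i1) (mulint _ i2), sub_eq_zero]
    convert e1 using 1
    · apply integral_congr_ae
      filter_upwards [hV p ψ] with x hx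
      rw [RCLike.inner_apply, hx]; push_cast; ring
    · apply integral_congr_ae
      filter_upwards [hV p (A ψ)] with x hx
      rw [RCLike.inner_apply, hx]; push_cast; ring)
  filter_upwards [key] with x hx
  exact sub_eq_zero.1 hx

lemma exists_pos_L2 (n : ℕ) : ∃ w : L2Rn n, ∃ v : (Fin n → ℝ) → ℝ, (∀ x, 0 < v x) ∧
    (w : (Fin n → ℝ) → ℂ) =ᵐ[volume] fun x => (v x : ℂ) := by
  obtain ⟨g, g0, gm, gi⟩ := exists_pos_lintegral_lt_of_sigmaFinite
    (volume : Measure (Fin n → ℝ)) (ε := 1) one_ne_zero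
  have hm : MemLp (fun x => ((Real.sqrt (g x) : ℝ) : ℂ)) 2 (volume : Measure (Fin n → ℝ)) := by
    have hmeas : Measurable (fun x => ((Real.sqrt (g x) : ℝ) : ℂ)) := by fun_prop
    rw [memLp_two_iff_integrable_sq_norm hmeas.aestronglyMeasurable]
    have : (fun x => ‖((Real.sqrt (g x) : ℝ) : ℂ)‖ ^ 2) = fun x => (g x : ℝ) := by
      ext x
      rw [Complex.norm_real, Real.norm_eq_abs, sq_abs, Real.sq_sqrt (g x).coe_nonneg]
    rw [this]
    refine ⟨by fun_prop, ?_⟩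
    rw [hasFiniteIntegral_iff_enorm]
    refine lt_of_le_of_lt (le_of_eq ?_) (gi.trans one_lt_top)
    congr 1; ext x
    simp
  exact ⟨hm.toLp _, fun x => Real.sqrt (g x), fun x => Real.sqrt_pos.2 (by exact_mod_cast g0 x),
    hm.coeFn_toLp⟩

lemma exists_density {n : ℕ} (A : L2Rn n →L[ℂ] L2Rn n) (hA : A.IsPositive)
    (hmul : ∀ φ ψ : L2Rn n,
      (fun x => conj (A φ x) * ψ x) =ᵐ[volume] fun x => conj (φ x) * A ψ x) :
    ∃ G : (Fin n → ℝ) → ℝ≥0∞, Measurable G ∧ ∀ φ : L2Rn n,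
      ENNReal.ofReal (⟪φ, A φ⟫).re = ∫⁻ x, G x * ‖φ x‖ₑ ^ 2 := by
  obtain ⟨w, v, v0, hw⟩ := exists_pos_L2 n
  set g : (Fin n → ℝ) → ℝ := fun x => (conj (A w x) / w x).re with hg
  have mlp : ∀ φ : L2Rn n, Measurable φ := fun φ => (Lp.stronglyMeasurable φ).measurable
  have gm : Measurable g := by
    have h1 := mlp w
    have h2 := mlp (A w)
    have h3 : Measurable (fun x => conj (A w x)) := Complex.continuous_conj.measurable.comp h2
    exact Complex.measurable_re.comp (h3.div h1)
  have hpt : ∀ φ : L2Rn n, (fun x => (inner ℂ (φ x) (A φ x)).re) =ᵐ[volume]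
      fun x => g x * ‖φ x‖ ^ 2 := by
    intro φ
    filter_upwards [hmul w φ, hw] with x hx hwx
    have hw0 : w x ≠ 0 := by rw [hwx]; exact_mod_cast (v0 x).ne'
    have hwc : conj (w x) = w x := by rw [hwx]; simp
    have : A φ x = conj (A w x) / w x * φ x := by
      rw [hwc] at hx
      field_simp
      rw [hx]; ring
    rw [RCLike.inner_apply, this, mul_assoc, Complex.mul_conj, mul_comm _ (Complex.ofReal _),
      Complex.re_ofReal_mul, Complex.normSq_eq_norm_sq, mul_comm]
  have hint : ∀ φ : L2Rn n, Integrable (fun x => g x * ‖φ x‖ ^ 2) := by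
    intro φ
    exact ((L2.integrable_inner (𝕜 := ℂ) φ (A φ)).re).congr (hpt φ)
  have hre : ∀ φ : L2Rn n, (⟪φ, A φ⟫).re = ∫ x, g x * ‖φ x‖ ^ 2 := by
    intro φ
    rw [← integral_congr_ae (hpt φ), L2.inner_def]
    exact (integral_re (L2.integrable_inner (𝕜 := ℂ) φ (A φ))).symm
  have hnn : 0 ≤ᵐ[volume] fun x => g x * ‖w x‖ ^ 2 := by
    apply ae_nonneg_of_forall_setIntegral_nonneg (hint w)
    intro S hS _
    have hm := (Lp.memLp w).indicator hS
    have h1 : 0 ≤ (⟪hm.toLp _, A (hm.toLp _)⟫).re := hA.re_inner_nonneg_right _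
    rw [hre, integral_congr_ae (g := S.indicator (fun x => g x * ‖w x‖ ^ 2)), 
      integral_indicator hS] at h1
    · exact h1
    · filter_upwards [hm.coeFn_toLp] with x hx
      rw [hx]
      by_cases hxS : x ∈ S <;> simp [hxS]
  have hg0 : ∀ᵐ x, 0 ≤ g x := by
    filter_upwards [hnn, hw] with x hx hwx
    have hw0 : w x ≠ 0 := by rw [hwx]; exact_mod_cast (v0 x).ne'
    have : 0 < ‖w x‖ ^ 2 := by positivity
    exact nonneg_of_mul_nonneg_left hx this
  refine ⟨fun x => ENNReal.ofReal (g x), gm.ennreal_ofReal, fun φ => ?_⟩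
  rw [hre, ofReal_integral_eq_lintegral_ofReal (hint φ)
    (by filter_upwards [hg0] with x hx; positivity)]
  apply lintegral_congr_ae
  filter_upwards [hg0] with x hx
  rw [ENNReal.ofReal_mul hx, ENNReal.ofReal_pow (norm_nonneg _), ofReal_norm]

end partB


section partC
open ENNReal

/-- The scalar measure `B ↦ ⟨φ, M(B) φ⟩`. -/
noncomputable def povmMeas {Ω : Type*} [MeasurableSpace Ω] {H : Type*} [NormedAddCommGroup H]
    [InnerProductSpace ℂ H] [CompleteSpace H] (M : POVM Ω H) (φ : H) : Measure Ω :=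
  Measure.ofMeasurable (fun B _ => ENNReal.ofReal (⟪φ, M.toFun B φ⟫).re)
    (by simp [povm_empty]) (by
      intro B hB hd
      have h := M.m_iUnion B hB hd φ φ
      have h2 : HasSum (fun k => (⟪φ, M.toFun (B k) φ⟫).re) (⟪φ, M.toFun (⋃ k, B k) φ⟫).re :=
        Complex.hasSum_re h
      rw [← h2.tsum_eq]
      exact ENNReal.ofReal_tsum_of_nonneg
        (fun k => (M.isPositive (B k) (hB k)).re_inner_nonneg_right φ) h2.summable)

lemma povmMeas_apply {Ω : Type*} [MeasurableSpace Ω] {H : Type*} [NormedAddCommGroup H]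
    [InnerProductSpace ℂ H] [CompleteSpace H] (M : POVM Ω H) (φ : H) {B : Set Ω}
    (hB : MeasurableSet B) :
    povmMeas M φ B = ENNReal.ofReal (⟪φ, M.toFun B φ⟫).re :=
  Measure.ofMeasurable_apply B hB

lemma povmMeas_univ {Ω : Type*} [MeasurableSpace Ω] {H : Type*} [NormedAddCommGroup H]
    [InnerProductSpace ℂ H] [CompleteSpace H] (M : POVM Ω H) (φ : H) :
    povmMeas M φ univ = ENNReal.ofReal (‖φ‖ ^ 2) := by
  rw [povmMeas_apply M φ MeasurableSet.univ, M.normalized]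
  congr 1
  exact inner_self_eq_norm_sq (𝕜 := ℂ) φ

instance {Ω : Type*} [MeasurableSpace Ω] {H : Type*} [NormedAddCommGroup H]
    [InnerProductSpace ℂ H] [CompleteSpace H] (M : POVM Ω H) (φ : H) :
    IsFiniteMeasure (povmMeas M φ) := ⟨by rw [povmMeas_univ]; exact ofReal_lt_top⟩

/-- The measure `|φ(x)|² dx`. -/
noncomputable def densMeas {n : ℕ} (φ : L2Rn n) : Measure (Fin n → ℝ) :=
  volume.withDensity (fun x => ‖φ x‖ₑ ^ 2)

lemma L2_measurable {n : ℕ} (φ : L2Rn n) : Measurable φ := (Lp.stronglyMeasurable φ).measurable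

lemma densMeas_univ {n : ℕ} (φ : L2Rn n) : densMeas φ univ = ENNReal.ofReal (‖φ‖ ^ 2) := by
  rw [densMeas, withDensity_apply _ MeasurableSet.univ, Measure.restrict_univ]
  have h := inner_self_eq_norm_sq (𝕜 := ℂ) φ
  rw [← h, L2.inner_def]
  have h2 := integral_re (L2.integrable_inner (𝕜 := ℂ) φ φ)
  rw [← h2, ofReal_integral_eq_lintegral_ofReal (L2.integrable_inner (𝕜 := ℂ) φ φ).re
    (Filter.Eventually.of_forall fun x => inner_self_nonneg)]
  congr 1; ext x
  rw [inner_self_eq_norm_sq, ENNReal.ofReal_pow (norm_nonneg _), ofReal_norm]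

instance {n : ℕ} (φ : L2Rn n) : IsFiniteMeasure (densMeas φ) :=
  ⟨by rw [densMeas_univ]; exact ofReal_lt_top⟩

lemma conv_apply' {n : ℕ} (μ ν : Measure (Fin n → ℝ)) [SFinite ν] {B : Set (Fin n → ℝ)}
    (hB : MeasurableSet B) : (μ ∗ ν) B = ∫⁻ q, ν ((fun y => q + y) ⁻¹' B) ∂μ := by
  rw [← lintegral_indicator_one hB, Measure.lintegral_conv (measurable_one.indicator hB)]
  congr 1; ext q
  rw [← lintegral_indicator_one (hB.preimage (measurable_const_add q))]
  rfl

lemma conv_swap {n : ℕ} (U : (Fin n → ℝ) → (L2Rn n ≃ₗᵢ[ℂ] L2Rn n))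
    (hU : ∀ q : Fin n → ℝ, ∀ φ : L2Rn n,
      (U q φ : (Fin n → ℝ) → ℂ) =ᵐ[volume] fun x => φ (x - q))
    (M : POVM (Fin n → ℝ) (L2Rn n)) (hMcov : TransCovariant n U M)
    (hd : ∀ B, MeasurableSet B → ∃ G : (Fin n → ℝ) → ℝ≥0∞, Measurable G ∧ ∀ φ : L2Rn n,
      ENNReal.ofReal (⟪φ, M.toFun B φ⟫).re = ∫⁻ x, G x * ‖φ x‖ₑ ^ 2) (φ φ' : L2Rn n) :
    densMeas φ' ∗ povmMeas M φ = densMeas φ ∗ povmMeas M φ' := by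
  ext B hB
  obtain ⟨G, hG, hGφ⟩ := hd B hB
  have main : ∀ φ φ' : L2Rn n, (densMeas φ' ∗ povmMeas M φ) B
      = ∫⁻ x, G x * ∫⁻ q, ‖φ' q‖ₑ ^ 2 * ‖φ (x - q)‖ₑ ^ 2 := by
    intro φ φ'
    have mφ := L2_measurable φ
    have mφ' := L2_measurable φ'
    have mt : ∀ q : Fin n → ℝ, povmMeas M φ ((fun y => q + y) ⁻¹' B)
        = ∫⁻ x, G x * ‖φ (x - q)‖ₑ ^ 2 := by
      intro q
      have hC := hB.preimage (measurable_const_add q)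
      rw [povmMeas_apply M φ hC, ← hMcov q _ hC φ φ]
      have : (fun x => x + q) '' ((fun y => q + y) ⁻¹' B) = B := by
        ext x
        constructor
        · rintro ⟨y, hy, rfl⟩
          show y + q ∈ B
          rw [add_comm]; exact hy
        · intro hx
          exact ⟨x - q, by simpa using hx, by simp⟩
      rw [this, hGφ]
      apply lintegral_congr_ae
      filter_upwards [hU q φ] with x hx
      rw [hx]
    rw [conv_apply' _ _ hB]
    simp_rw [mt]
    have mj : Measurable (fun z : (Fin n → ℝ) × (Fin n → ℝ) => G z.2 * ‖φ (z.2 - z.1)‖ₑ ^ 2) := by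
      fun_prop
    rw [densMeas, lintegral_withDensity_eq_lintegral_mul _ (by fun_prop) (by
      exact mj.lintegral_prod_right')]
    have e1 : ∀ q, ((fun x => ‖φ' x‖ₑ ^ 2) * fun q => ∫⁻ x, G x * ‖φ (x - q)‖ₑ ^ 2) q
        = ∫⁻ x, ‖φ' q‖ₑ ^ 2 * (G x * ‖φ (x - q)‖ₑ ^ 2) := by
      intro q
      rw [Pi.mul_apply, lintegral_const_mul _ (by fun_prop)]
    simp_rw [e1]
    rw [lintegral_lintegral_swap (by
      apply Measurable.aemeasurable
      simp only [Function.uncurry_def]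
      fun_prop)]
    congr 1; ext x
    rw [← lintegral_const_mul _ (by fun_prop)]
    congr 1; ext q; ring
  rw [main, main]
  congr 1; ext x
  congr 1
  rw [← lintegral_sub_left_eq_self _ x]
  congr 1; ext q
  rw [_root_.sub_sub_cancel, mul_comm]

end partC


section partD
open ENNReal Filter Topology

lemma exists_bump {n : ℕ} {ε : ℝ} (hε : 0 < ε) :
    ∃ φ : L2Rn n, ‖φ‖ = 1 ∧ ∀ᵐ x ∂(densMeas φ), ‖x‖ ≤ ε := by
  set S : Set (Fin n → ℝ) := Metric.closedBall 0 ε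
  have hS : MeasurableSet S := measurableSet_closedBall
  have hfin : volume S ≠ ⊤ := measure_closedBall_lt_top.ne
  have hpos : 0 < volume S := Metric.measure_closedBall_pos _ _ hε
  have hne : indicatorConstLp 2 hS hfin (1 : ℂ) ≠ 0 := by
    intro h
    have h1 := norm_indicatorConstLp (p := 2) (hs := hS) (hμs := hfin) (c := (1 : ℂ))
      (by simp) (by simp)
    rw [h] at h1
    have h2 : 0 < volume.real S := ENNReal.toReal_pos hpos.ne' hfin
    have h3 := Real.rpow_pos_of_pos h2 (1 / (2 : ℝ≥0∞).toReal)
    simp at h1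
    simp at h3
    linarith
  set ψ : L2Rn n := indicatorConstLp 2 hS hfin (1 : ℂ)
  refine ⟨((‖ψ‖ : ℂ)⁻¹) • ψ, by rw [norm_smul]; simp [hne], ?_⟩
  rw [densMeas, ae_withDensity_iff (by have := L2_measurable ((‖ψ‖ : ℂ)⁻¹ • ψ); fun_prop)]
  filter_upwards [Lp.coeFn_smul ((‖ψ‖ : ℂ)⁻¹) ψ, indicatorConstLp_coeFn (p := 2) (hs := hS)
    (hμs := hfin) (c := (1 : ℂ))] with x h1 h2 h3
  by_contra hx
  apply h3
  have hxS : x ∉ S := by simpa [S] using hx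
  rw [h1, Pi.smul_apply, h2, indicator_of_notMem hxS]
  simp

lemma dens_prob {n : ℕ} {φ : L2Rn n} (h : ‖φ‖ = 1) : IsProbabilityMeasure (densMeas φ) :=
  ⟨by rw [densMeas_univ, h]; simp⟩

lemma povm_prob {n : ℕ} (M : POVM (Fin n → ℝ) (L2Rn n)) {φ : L2Rn n} (h : ‖φ‖ = 1) :
    IsProbabilityMeasure (povmMeas M φ) :=
  ⟨by rw [povmMeas_univ, h]; simp⟩

lemma exists_approx (n : ℕ) : ∃ φ : ℕ → L2Rn n, (∀ k, ‖φ k‖ = 1) ∧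
    (∀ k, ∀ᵐ x ∂(densMeas (φ k)), ‖x‖ ≤ 1) ∧
    ∀ L, Tendsto (fun k => charFunDual (densMeas (φ k)) L) atTop (𝓝 1) := by
  choose φ h1 h2 using fun k : ℕ => exists_bump (n := n) (ε := 1 / ((k : ℝ) + 1)) (by positivity)
  refine ⟨φ, h1, fun k => ?_, fun L => ?_⟩
  · filter_upwards [h2 k] with x hx
    refine hx.trans ?_
    rw [div_le_one (by positivity)]
    have : (0 : ℝ) ≤ k := by positivity
    linarith
  · rw [tendsto_iff_norm_sub_tendsto_zero]
    have hlim : Tendsto (fun k : ℕ => ‖L‖ * (1 / ((k : ℝ) + 1))) atTop (𝓝 0) := by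
      simpa using (tendsto_one_div_add_atTop_nhds_zero_nat (𝕜 := ℝ)).const_mul ‖L‖
    refine squeeze_zero (fun _ => norm_nonneg _) (fun k => ?_) hlim
    have := dens_prob (h1 k)
    have e : charFunDual (densMeas (φ k)) L - 1
        = ∫ x, (Complex.exp (L x * Complex.I) - 1) ∂(densMeas (φ k)) := by
      rw [integral_sub _ (integrable_const _), charFunDual_apply]
      · simp
      · refine (integrable_const (1 : ℝ)).mono (Continuous.aestronglyMeasurable (by fun_prop)) ?_
        exact Eventually.of_forall fun x => by rw [Complex.norm_exp_ofReal_mul_I]; simp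
    rw [e]
    refine (norm_integral_le_of_norm_le_const (C := ‖L‖ * (1 / ((k : ℝ) + 1))) ?_).trans
      (by simp)
    filter_upwards [h2 k] with x hx
    have h3 := Real.norm_exp_I_mul_ofReal_sub_one_le (x := L x)
    rw [mul_comm] at h3
    exact h3.trans ((L.le_opNorm x).trans (by gcongr))

lemma conv_ball_le {n : ℕ} (ν μ : Measure (Fin n → ℝ)) [IsProbabilityMeasure ν] [SFinite μ]
    (hν : ∀ᵐ x ∂ν, ‖x‖ ≤ 1) (r : ℝ) :
    (ν ∗ μ) (Metric.closedBall 0 (r + 1))ᶜ ≤ μ (Metric.closedBall 0 r)ᶜ := by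
  rw [conv_apply' _ _ measurableSet_closedBall.compl]
  calc _ ≤ ∫⁻ q, μ (Metric.closedBall 0 r)ᶜ ∂ν := by
        apply lintegral_mono_ae
        filter_upwards [hν] with q hq
        apply measure_mono
        intro y hy
        simp only [mem_preimage, mem_compl_iff, mem_closedBall_zero_iff, not_le] at hy ⊢
        have := norm_add_le q y
        linarith
    _ = _ := by simp

lemma le_conv_ball {n : ℕ} (ν μ : Measure (Fin n → ℝ)) [IsProbabilityMeasure ν] [SFinite μ]
    (hν : ∀ᵐ x ∂ν, ‖x‖ ≤ 1) (r : ℝ) :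
    μ (Metric.closedBall 0 (r + 1))ᶜ ≤ (ν ∗ μ) (Metric.closedBall 0 r)ᶜ := by
  rw [conv_apply' _ _ measurableSet_closedBall.compl]
  calc _ = ∫⁻ q, μ (Metric.closedBall 0 (r + 1))ᶜ ∂ν := by simp
    _ ≤ _ := by
        apply lintegral_mono_ae
        filter_upwards [hν] with q hq
        apply measure_mono
        intro y hy
        simp only [mem_preimage, mem_compl_iff, mem_closedBall_zero_iff, not_le] at hy ⊢
        have := norm_sub_le (q + y) q
        rw [add_sub_cancel_left] at this
        linarith

lemma exists_rho {n : ℕ} (M : POVM (Fin n → ℝ) (L2Rn n))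
    (hsw : ∀ φ φ' : L2Rn n, densMeas φ' ∗ povmMeas M φ = densMeas φ ∗ povmMeas M φ') :
    ∃ ρ : ProbabilityMeasure (Fin n → ℝ), ∀ φ, povmMeas M φ = densMeas φ ∗ (ρ : Measure (Fin n → ℝ)) := by
  obtain ⟨φ, h1, h2, h3⟩ := exists_approx n
  let P : ℕ → ProbabilityMeasure (Fin n → ℝ) := fun k => ⟨povmMeas M (φ k), povm_prob M (h1 k)⟩
  have htight : IsTightMeasureSet {((μ : ProbabilityMeasure (Fin n → ℝ)) : Measure (Fin n → ℝ)) |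
      μ ∈ Set.range P} := by
    rw [isTightMeasureSet_iff_exists_isCompact_measure_compl_le]
    intro ε hε
    have ht := isTightMeasureSet_singleton (μ := povmMeas M (φ 0))
    rw [isTightMeasureSet_iff_exists_isCompact_measure_compl_le] at ht
    obtain ⟨K, hK, hK2⟩ := ht ε hε
    obtain ⟨R, hR⟩ := hK.isBounded.subset_closedBall 0
    refine ⟨Metric.closedBall 0 (R + 1 + 1), isCompact_closedBall _ _, ?_⟩
    rintro _ ⟨_, ⟨k, rfl⟩, rfl⟩
    have := dens_prob (h1 0)
    have := dens_prob (h1 k)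
    calc povmMeas M (φ k) (Metric.closedBall 0 (R + 1 + 1))ᶜ
        ≤ (densMeas (φ 0) ∗ povmMeas M (φ k)) (Metric.closedBall 0 (R + 1))ᶜ :=
          le_conv_ball _ _ (h2 0) _
      _ = (densMeas (φ k) ∗ povmMeas M (φ 0)) (Metric.closedBall 0 (R + 1))ᶜ := by rw [hsw]
      _ ≤ povmMeas M (φ 0) (Metric.closedBall 0 R)ᶜ := conv_ball_le _ _ (h2 k) _
      _ ≤ povmMeas M (φ 0) Kᶜ := measure_mono (compl_subset_compl.2 hR)
      _ ≤ ε := hK2 _ rfl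
  have hc := isCompact_closure_of_isTightMeasureSet htight
  rw [isCompact_iff_ultrafilter_le_nhds] at hc
  obtain ⟨ρ, -, hρ⟩ := hc ((hyperfilter ℕ).map P) (by
    rw [le_principal_iff]
    exact Filter.mem_map.2 (Filter.univ_mem' (fun k => subset_closure (mem_range_self k))))
  have hρ' : Tendsto P (hyperfilter ℕ : Filter ℕ) (𝓝 ρ) := hρ
  rw [ProbabilityMeasure.tendsto_iff_forall_integral_rclike_tendsto ℂ] at hρ'
  have hle : (hyperfilter ℕ : Filter ℕ) ≤ atTop := by
    rw [← Nat.cofinite_eq_atTop]; exact hyperfilter_le_cofinite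
  refine ⟨ρ, fun ψ => ?_⟩
  apply Measure.ext_of_charFunDual
  ext L
  rw [charFunDual_conv]
  have t1 : Tendsto (fun k => charFunDual (densMeas (φ k)) L * charFunDual (povmMeas M ψ) L)
      (hyperfilter ℕ : Filter ℕ) (𝓝 (1 * charFunDual (povmMeas M ψ) L)) :=
    ((h3 L).mono_left hle).mul_const _
  have t2 : Tendsto (fun k => charFunDual (densMeas ψ) L * charFunDual (povmMeas M (φ k)) L)
      (hyperfilter ℕ : Filter ℕ) (𝓝 (charFunDual (densMeas ψ) L * charFunDual (ρ : Measure (Fin n → ℝ)) L)) :=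
    (hρ' (BoundedContinuousFunction.probCharDual L)).const_mul _
  have e : ∀ k, charFunDual (densMeas (φ k)) L * charFunDual (povmMeas M ψ) L
      = charFunDual (densMeas ψ) L * charFunDual (povmMeas M (φ k)) L := by
    intro k
    rw [← charFunDual_conv, ← charFunDual_conv, hsw]
  simp_rw [e] at t1
  have := tendsto_nhds_unique t1 t2
  rwa [one_mul] at this

lemma rho_unique {n : ℕ} (ρ ρ' : Measure (Fin n → ℝ)) [IsFiniteMeasure ρ] [IsFiniteMeasure ρ']
    (h : ∀ φ : L2Rn n, densMeas φ ∗ ρ = densMeas φ ∗ ρ') : ρ = ρ' := by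
  obtain ⟨φ, h1, h2, h3⟩ := exists_approx n
  apply Measure.ext_of_charFunDual
  ext L
  have t1 := (h3 L).mul_const (charFunDual ρ L)
  have t2 := (h3 L).mul_const (charFunDual ρ' L)
  simp_rw [← charFunDual_conv, h] at t1 t2
  simpa using tendsto_nhds_unique t1 t2

end partD


section partE
open ENNReal Filter Topology ProbabilityTheory

lemma mulOp_memLp {n : ℕ} (f : (Fin n → ℝ) → ℝ) (hf : Measurable f)
    (hb : ∀ x, |f x| ≤ 1) (φ : L2Rn n) : MemLp (fun x => (f x : ℂ) * φ x) 2 volume :=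
    (Lp.memLp φ).of_le (by have := L2_measurable φ; fun_prop)
      (Eventually.of_forall fun x => by
        rw [norm_mul, Complex.norm_real, Real.norm_eq_abs]
        exact mul_le_of_le_one_left (norm_nonneg _) (hb x))

/-- Multiplication by a measurable function bounded by one. -/
noncomputable def mulOp {n : ℕ} (f : (Fin n → ℝ) → ℝ) (hf : Measurable f)
    (hb : ∀ x, |f x| ≤ 1) : L2Rn n →L[ℂ] L2Rn n :=
  have hm := mulOp_memLp f hf hb
  LinearMap.mkContinuous
    { toFun := fun φ => (hm φ).toLp _
      map_add' := fun φ ψ => by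
        ext1
        filter_upwards [(hm (φ + ψ)).coeFn_toLp, (hm φ).coeFn_toLp, (hm ψ).coeFn_toLp,
          Lp.coeFn_add φ ψ, Lp.coeFn_add ((hm φ).toLp _) ((hm ψ).toLp _)] with x h1 h2 h3 h4 h5
        rw [h1, h5, Pi.add_apply, h2, h3, h4, Pi.add_apply, mul_add]
      map_smul' := fun c φ => by
        ext1
        filter_upwards [(hm (c • φ)).coeFn_toLp, (hm φ).coeFn_toLp,
          Lp.coeFn_smul c φ, Lp.coeFn_smul c ((hm φ).toLp _)] with x h1 h2 h4 h5
        rw [h1, RingHom.id_apply, h5, Pi.smul_apply, h2, h4, Pi.smul_apply, smul_eq_mul,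
          smul_eq_mul]
        ring } 1 (fun φ => by
        rw [one_mul]
        apply Lp.norm_le_norm_of_ae_le
        filter_upwards [(hm φ).coeFn_toLp] with x hx
        simp only [LinearMap.coe_mk, AddHom.coe_mk]
        rw [hx, norm_mul, Complex.norm_real, Real.norm_eq_abs]
        exact mul_le_of_le_one_left (norm_nonneg _) (hb x))

lemma mulOp_coe {n : ℕ} (f : (Fin n → ℝ) → ℝ) (hf : Measurable f)
    (hb : ∀ x, |f x| ≤ 1) (φ : L2Rn n) :
    (mulOp f hf hb φ : (Fin n → ℝ) → ℂ) =ᵐ[volume] fun x => (f x : ℂ) * φ x :=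
  MemLp.coeFn_toLp (mulOp_memLp f hf hb φ)

lemma inner_mulOp {n : ℕ} (f : (Fin n → ℝ) → ℝ) (hf : Measurable f)
    (hb : ∀ x, |f x| ≤ 1) (φ ψ : L2Rn n) :
    ⟪φ, mulOp f hf hb ψ⟫ = ∫ x, (f x : ℂ) * ⟪φ x, ψ x⟫ := by
  rw [L2.inner_def]
  apply integral_congr_ae
  filter_upwards [mulOp_coe f hf hb ψ] with x hx
  rw [hx, RCLike.inner_apply, RCLike.inner_apply]; ring

lemma inner_mulOp_self {n : ℕ} (f : (Fin n → ℝ) → ℝ) (hf : Measurable f)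
    (hb : ∀ x, |f x| ≤ 1) (φ : L2Rn n) :
    ⟪φ, mulOp f hf hb φ⟫ = ((∫ x, f x * ‖φ x‖ ^ 2 : ℝ) : ℂ) := by
  rw [inner_mulOp, ← integral_complex_ofReal]
  congr 1; ext x
  rw [inner_self_eq_norm_sq_to_K]; simp

lemma mulOp_pos {n : ℕ} (f : (Fin n → ℝ) → ℝ) (hf : Measurable f)
    (hb : ∀ x, |f x| ≤ 1) (h0 : ∀ x, 0 ≤ f x) : (mulOp f hf hb).IsPositive := by
  rw [ContinuousLinearMap.isPositive_iff_complex]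
  intro φ
  have h : ⟪mulOp f hf hb φ, φ⟫ = ((∫ x, f x * ‖φ x‖ ^ 2 : ℝ) : ℂ) := by
    rw [← inner_conj_symm, inner_mulOp_self, Complex.conj_ofReal]
  rw [h]
  refine ⟨by simp, ?_⟩
  simp only [RCLike.re_to_complex, Complex.ofReal_re]
  exact integral_nonneg fun x => mul_nonneg (h0 x) (by positivity)

/-- The density function `x ↦ ρ(B - x)`. -/
noncomputable def rhoFun {n : ℕ} (ρ : Measure (Fin n → ℝ)) (B : Set (Fin n → ℝ))
    (x : Fin n → ℝ) : ℝ := ρ.real ((fun y => x + y) ⁻¹' B)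

lemma rhoFun_meas {n : ℕ} (ρ : Measure (Fin n → ℝ)) [IsProbabilityMeasure ρ]
    {B : Set (Fin n → ℝ)} (hB : MeasurableSet B) : Measurable (rhoFun ρ B) := by
  have h : MeasurableSet ((fun z : (Fin n → ℝ) × (Fin n → ℝ) => z.1 + z.2) ⁻¹' B) :=
    hB.preimage measurable_add
  exact (measurable_measure_prodMk_left (ν := ρ) h).ennreal_toReal

lemma rhoFun_nonneg {n : ℕ} (ρ : Measure (Fin n → ℝ)) (B : Set (Fin n → ℝ)) (x) :
    0 ≤ rhoFun ρ B x := measureReal_nonneg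

lemma rhoFun_bound {n : ℕ} (ρ : Measure (Fin n → ℝ)) [IsProbabilityMeasure ρ]
    (B : Set (Fin n → ℝ)) (x) : |rhoFun ρ B x| ≤ 1 := by
  rw [abs_of_nonneg (rhoFun_nonneg ρ B x)]
  exact measureReal_le_one

/-- The operator of multiplication by `ρ(B - x)`. -/
noncomputable def rhoOp {n : ℕ} (ρ : Measure (Fin n → ℝ)) [IsProbabilityMeasure ρ]
    (B : Set (Fin n → ℝ)) : L2Rn n →L[ℂ] L2Rn n :=
  if hB : MeasurableSet B then mulOp (rhoFun ρ B) (rhoFun_meas ρ hB) (rhoFun_bound ρ B) else 0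

lemma rhoOp_eq {n : ℕ} (ρ : Measure (Fin n → ℝ)) [IsProbabilityMeasure ρ]
    {B : Set (Fin n → ℝ)} (hB : MeasurableSet B) :
    rhoOp ρ B = mulOp (rhoFun ρ B) (rhoFun_meas ρ hB) (rhoFun_bound ρ B) := dif_pos hB

lemma rhoFun_hasSum {n : ℕ} (ρ : Measure (Fin n → ℝ)) [IsProbabilityMeasure ρ]
    (B : ℕ → Set (Fin n → ℝ)) (hB : ∀ k, MeasurableSet (B k))
    (hd : Pairwise (Function.onFun Disjoint B)) (x) :
    HasSum (fun k => rhoFun ρ (B k) x) (rhoFun ρ (⋃ k, B k) x) := by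
  have h := measure_iUnion (μ := ρ) (f := fun k => (fun y => x + y) ⁻¹' B k)
    (fun i j hij => (hd hij).preimage _) (fun k => (hB k).preimage (measurable_const_add x))
  have hs : Summable (fun k => rhoFun ρ (B k) x) :=
    ENNReal.summable_toReal (by rw [← h]; exact measure_ne_top _ _)
  have e : rhoFun ρ (⋃ k, B k) x = ∑' k, rhoFun ρ (B k) x := by
    unfold rhoFun Measure.real
    rw [preimage_iUnion, h, ENNReal.tsum_toReal_eq (fun k => measure_ne_top _ _)]
  rw [e]
  exact hs.hasSum

/-- The POVM obtained by smearing the canonical position observable with `ρ`. -/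
noncomputable def rhoPOVM {n : ℕ} (ρ : Measure (Fin n → ℝ)) [IsProbabilityMeasure ρ] :
    POVM (Fin n → ℝ) (L2Rn n) where
  toFun := rhoOp ρ
  isPositive B hB := by
    rw [rhoOp_eq ρ hB]
    exact mulOp_pos _ _ _ (rhoFun_nonneg ρ B)
  normalized := by
    rw [rhoOp_eq ρ MeasurableSet.univ]
    ext1 φ
    ext1
    filter_upwards [mulOp_coe (rhoFun ρ univ) (rhoFun_meas ρ MeasurableSet.univ)
      (rhoFun_bound ρ univ) φ] with x hx
    rw [hx]
    simp [rhoFun]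
  m_iUnion B hB hd φ ψ := by
    rw [rhoOp_eq ρ (MeasurableSet.iUnion hB), inner_mulOp]
    simp_rw [fun k => rhoOp_eq ρ (hB k), inner_mulOp]
    have hi := L2.integrable_inner (𝕜 := ℂ) φ ψ
    have hsum : ∀ x, HasSum (fun k => rhoFun ρ (B k) x * ‖⟪φ x, ψ x⟫‖)
        (rhoFun ρ (⋃ k, B k) x * ‖⟪φ x, ψ x⟫‖) := fun x =>
      (rhoFun_hasSum ρ B hB hd x).mul_right _
    apply hasSum_integral_of_dominated_convergence
      (fun k x => rhoFun ρ (B k) x * ‖⟪φ x, ψ x⟫‖)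
    · intro k
      have := rhoFun_meas ρ (hB k)
      exact AEStronglyMeasurable.mul (by fun_prop) hi.aestronglyMeasurable
    · intro k
      refine Eventually.of_forall fun x => ?_
      rw [norm_mul, Complex.norm_real, Real.norm_eq_abs, abs_of_nonneg (rhoFun_nonneg _ _ _)]
    · exact Eventually.of_forall fun x => (hsum x).summable
    · have : (fun x => ∑' k, rhoFun ρ (B k) x * ‖⟪φ x, ψ x⟫‖)
          = fun x => rhoFun ρ (⋃ k, B k) x * ‖⟪φ x, ψ x⟫‖ := by
        ext x; exact (hsum x).tsum_eq
      rw [this]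
      refine hi.norm.bdd_mul (c := 1)
        (rhoFun_meas ρ (MeasurableSet.iUnion hB)).aestronglyMeasurable ?_
      exact Eventually.of_forall fun x => by
        rw [Real.norm_eq_abs]; exact rhoFun_bound _ _ _
    · refine Eventually.of_forall fun x => ?_
      exact (Complex.hasSum_ofReal.2 (rhoFun_hasSum ρ B hB hd x)).mul_right _

lemma rhoPOVM_inner {n : ℕ} (ρ : Measure (Fin n → ℝ)) [IsProbabilityMeasure ρ]
    {B : Set (Fin n → ℝ)} (hB : MeasurableSet B) (φ ψ : L2Rn n) :
    ⟪φ, (rhoPOVM ρ).toFun B ψ⟫ = ∫ x, (rhoFun ρ B x : ℂ) * ⟪φ x, ψ x⟫ := by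
  show ⟪φ, rhoOp ρ B ψ⟫ = _
  rw [rhoOp_eq ρ hB, inner_mulOp]

lemma rhoPOVM_cov {n : ℕ} (U : (Fin n → ℝ) → (L2Rn n ≃ₗᵢ[ℂ] L2Rn n))
    (hU : ∀ q : Fin n → ℝ, ∀ φ : L2Rn n,
      (U q φ : (Fin n → ℝ) → ℂ) =ᵐ[volume] fun x => φ (x - q))
    (ρ : Measure (Fin n → ℝ)) [IsProbabilityMeasure ρ] : TransCovariant n U (rhoPOVM ρ) := by
  intro q B hB φ ψ
  have hB' : MeasurableSet ((fun x => x + q) '' B) :=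
    (MeasurableEquiv.addRight q).measurableSet_image.2 hB
  rw [rhoPOVM_inner ρ hB, rhoPOVM_inner ρ hB',
    ← integral_sub_right_eq_self (fun x => (rhoFun ρ B x : ℂ) * ⟪φ x, ψ x⟫) q]
  apply integral_congr_ae
  filter_upwards [hU q φ, hU q ψ] with x h1 h2
  rw [h1, h2]
  congr 2
  unfold rhoFun
  congr 1
  ext y
  simp only [mem_preimage, mem_image]
  constructor
  · rintro ⟨z, hz, h⟩
    have : x - q + y = z := by rw [sub_add_eq_add_sub, ← h]; simp
    rwa [this]
  · intro h
    exact ⟨_, h, by abel⟩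

lemma rhoPOVM_inv {n : ℕ} (V : (Fin n → ℝ) → (L2Rn n ≃ₗᵢ[ℂ] L2Rn n))
    (hV : ∀ p : Fin n → ℝ, ∀ φ : L2Rn n,
      (V p φ : (Fin n → ℝ) → ℂ) =ᵐ[volume]
        fun x => Complex.exp (Complex.I * (∑ k, p k * x k)) * φ x)
    (ρ : Measure (Fin n → ℝ)) [IsProbabilityMeasure ρ] : BoostInvariant n V (rhoPOVM ρ) := by
  intro p B hB φ ψ
  rw [rhoPOVM_inner ρ hB, rhoPOVM_inner ρ hB]
  apply integral_congr_ae
  filter_upwards [hV p φ, hV p ψ] with x h1 h2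
  rw [h1, h2, RCLike.inner_apply, RCLike.inner_apply, map_mul]
  have e : Complex.exp (Complex.I * (∑ k, p k * x k)) *
      conj (Complex.exp (Complex.I * (∑ k, p k * x k))) = 1 := by
    rw [Complex.mul_conj, Complex.normSq_eq_norm_sq]
    have : ‖Complex.exp (Complex.I * (∑ k, p k * x k))‖ = 1 := by
      have := Complex.norm_exp_ofReal_mul_I (∑ k, p k * x k)
      rw [mul_comm] at this
      push_cast at this ⊢
      exact this
    push_cast at this ⊢
    rw [this]; simp
  push_cast at e ⊢
  linear_combination ((rhoFun ρ B x : ℂ) * ψ x * conj (φ x)) * e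

lemma rhoPOVM_meas {n : ℕ} (ρ : Measure (Fin n → ℝ)) [IsProbabilityMeasure ρ] (φ : L2Rn n) :
    povmMeas (rhoPOVM ρ) φ = densMeas φ ∗ ρ := by
  ext B hB
  have hm := rhoFun_meas ρ hB
  have mφ := L2_measurable φ
  rw [povmMeas_apply _ _ hB, conv_apply' _ _ hB]
  show ENNReal.ofReal (⟪φ, rhoOp ρ B φ⟫).re = _
  have hint : Integrable (fun x => rhoFun ρ B x * ‖φ x‖ ^ 2) := by
    refine (Integrable.bdd_mul (c := 1) ?_ hm.aestronglyMeasurable ?_)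
    · exact (memLp_two_iff_integrable_sq_norm (Lp.aestronglyMeasurable φ)).1 (Lp.memLp φ)
    · exact Eventually.of_forall fun x => by
        rw [Real.norm_eq_abs]; exact rhoFun_bound _ _ _
  have hm2 : Measurable (fun q => ρ ((fun y => q + y) ⁻¹' B)) := by
    have h : MeasurableSet ((fun z : (Fin n → ℝ) × (Fin n → ℝ) => z.1 + z.2) ⁻¹' B) :=
      hB.preimage measurable_add
    exact measurable_measure_prodMk_left (ν := ρ) h
  rw [rhoOp_eq ρ hB, inner_mulOp_self, Complex.ofReal_re,
    ofReal_integral_eq_lintegral_ofReal hint (Eventually.of_forall fun x =>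
      mul_nonneg (rhoFun_nonneg _ _ _) (by positivity)), densMeas,
    lintegral_withDensity_eq_lintegral_mul _ (by fun_prop) hm2]
  congr 1; ext x
  rw [ENNReal.ofReal_mul (rhoFun_nonneg _ _ _), ENNReal.ofReal_pow (norm_nonneg _), ofReal_norm,
    Pi.mul_apply, mul_comm, rhoFun, ofReal_measureReal]

lemma povm_ext {n : ℕ} (M M' : POVM (Fin n → ℝ) (L2Rn n))
    (h : ∀ φ, povmMeas M φ = povmMeas M' φ) {B : Set (Fin n → ℝ)} (hB : MeasurableSet B) :
    M.toFun B = M'.toFun B := by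
  apply ContinuousLinearMap.coe_injective
  rw [← ext_inner_map]
  intro φ
  have h1 := M.isPositive B hB
  have h2 := M'.isPositive B hB
  have h3 := congrArg (fun μ => μ B) (h φ)
  simp only [povmMeas_apply _ _ hB] at h3
  have h4 : (⟪φ, M.toFun B φ⟫).re = (⟪φ, M'.toFun B φ⟫).re :=
    (ENNReal.ofReal_eq_ofReal_iff (h1.re_inner_nonneg_right φ) (h2.re_inner_nonneg_right φ)).1 h3
  have h5 := ((ContinuousLinearMap.isPositive_iff_complex _).1 h1 φ).1
  have h6 := ((ContinuousLinearMap.isPositive_iff_complex _).1 h2 φ).1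
  show ⟪M.toFun B φ, φ⟫ = ⟪M'.toFun B φ, φ⟫
  rw [← h5, ← h6, h1.inner_left_eq_inner_right, h2.inner_left_eq_inner_right]
  simp only [RCLike.re_to_complex, h4]

lemma rho_dirac {n : ℕ} (U : (Fin n → ℝ) → (L2Rn n ≃ₗᵢ[ℂ] L2Rn n))
    (hU : ∀ q : Fin n → ℝ, ∀ φ : L2Rn n,
      (U q φ : (Fin n → ℝ) → ℂ) =ᵐ[volume] fun x => φ (x - q))
    (V : (Fin n → ℝ) → (L2Rn n ≃ₗᵢ[ℂ] L2Rn n))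
    (hV : ∀ p : Fin n → ℝ, ∀ φ : L2Rn n,
      (V p φ : (Fin n → ℝ) → ℂ) =ᵐ[volume]
        fun x => Complex.exp (Complex.I * (∑ k, p k * x k)) * φ x)
    (M : POVM (Fin n → ℝ) (L2Rn n)) (hext : IsExtremeInL n U V M)
    (ρ : Measure (Fin n → ℝ)) [IsProbabilityMeasure ρ]
    (hM : ∀ B, MeasurableSet B → M.toFun B = (rhoPOVM ρ).toFun B) :
    ∃ q, ρ = Measure.dirac q := by
  have hz : IsZeroOneMeasure ρ := by
    refine ⟨fun s hs => ?_⟩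
    by_contra hcon
    push Not at hcon
    obtain ⟨h0, h1⟩ := hcon
    have hc0 : ρ sᶜ ≠ 0 := by
      intro h; exact h1 ((prob_compl_eq_zero_iff hs).1 h)
    have i1 : IsProbabilityMeasure (ρ[|s]) := cond_isProbabilityMeasure h0
    have i2 : IsProbabilityMeasure (ρ[|sᶜ]) := cond_isProbabilityMeasure hc0
    have hcs : ρ.real sᶜ = 1 - ρ.real s := probReal_compl_eq_one_sub hs
    have t0 : 0 < ρ.real s := ENNReal.toReal_pos h0 (measure_ne_top _ _)
    have t1 : ρ.real s < 1 := by
      have : 0 < ρ.real sᶜ := ENNReal.toReal_pos hc0 (measure_ne_top _ _)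
      linarith
    have hdec : ∀ C, ρ.real C = ρ.real s * (ρ[|s]).real C + (1 - ρ.real s) * (ρ[|sᶜ]).real C := by
      intro C
      have h := congrArg ENNReal.toReal (cond_add_cond_compl_eq (μ := ρ) (t := C) hs)
      rw [ENNReal.toReal_add (by finiteness) (by finiteness), ENNReal.toReal_mul,
        ENNReal.toReal_mul] at h
      rw [← hcs]
      unfold Measure.real
      rw [← h]; ring
    have hE := hext (rhoPOVM (ρ[|s])) (rhoPOVM (ρ[|sᶜ])) (rhoPOVM_cov U hU _)
      (rhoPOVM_inv V hV _) (rhoPOVM_cov U hU _) (rhoPOVM_inv V hV _) (ρ.real s) t0 t1 (by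
        intro B hB
        rw [hM B hB]
        show rhoOp ρ B = (ρ.real s : ℂ) • rhoOp (ρ[|s]) B
          + ((1 - ρ.real s : ℝ) : ℂ) • rhoOp (ρ[|sᶜ]) B
        rw [rhoOp_eq _ hB, rhoOp_eq _ hB, rhoOp_eq _ hB]
        ext1 φ
        refine ext_inner_left ℂ fun ψ => ?_
        rw [_root_.add_apply, _root_.smul_apply, _root_.smul_apply, inner_add_right,
          inner_smul_right, inner_smul_right, inner_mulOp, inner_mulOp, inner_mulOp,
          ← integral_const_mul, ← integral_const_mul, ← integral_add]
        · congr 1; ext x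
          have := hdec ((fun y => x + y) ⁻¹' B)
          unfold rhoFun
          rw [this]; push_cast; ring
        all_goals
          refine Integrable.const_mul ?_ _
          refine (L2.integrable_inner (𝕜 := ℂ) ψ φ).bdd_mul (c := 1) ?_ ?_
          · exact (Complex.measurable_ofReal.comp (rhoFun_meas _ hB)).aestronglyMeasurable
          · exact Eventually.of_forall fun x => by
              rw [Complex.norm_real, Real.norm_eq_abs]; exact rhoFun_bound _ _ _)
    have heq : ρ[|s] = ρ := by
      apply rho_unique
      intro φ
      rw [← rhoPOVM_meas, ← rhoPOVM_meas]
      ext B hB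
      rw [povmMeas_apply _ _ hB, povmMeas_apply _ _ hB, (hE B hB).1, hM B hB]
    apply h1
    have h2 : ρ[|s] s = 1 := cond_apply_self h0 (measure_ne_top _ _)
    rwa [heq] at h2
  have : NeZero ρ := ⟨IsProbabilityMeasure.ne_zero ρ⟩
  exact IsZeroOneMeasure.exists_eq_dirac

end partE


theorem stmt6 (n : ℕ) (hn : 1 ≤ n)
    (U : (Fin n → ℝ) → (L2Rn n ≃ₗᵢ[ℂ] L2Rn n))
    (hU : ∀ q : Fin n → ℝ, ∀ φ : L2Rn n,
      (U q φ : (Fin n → ℝ) → ℂ) =ᵐ[volume] fun x => φ (x - q))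
    (V : (Fin n → ℝ) → (L2Rn n ≃ₗᵢ[ℂ] L2Rn n))
    (hV : ∀ p : Fin n → ℝ, ∀ φ : L2Rn n,
      (V p φ : (Fin n → ℝ) → ℂ) =ᵐ[volume]
        fun x => Complex.exp (Complex.I * (∑ k, p k * x k)) * φ x)
    (M : POVM (Fin n → ℝ) (L2Rn n))
    (hMcov : TransCovariant n U M) (hMinv : BoostInvariant n V M) :
    IsExtremeInL n U V M ↔
      -- `M` is a translated canonical position observable `M_q(B) = M_κ(B − q)`,
      -- i.e. multiplication by the indicator of `B − q` (in particular a PVM)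
      ∃ q : Fin n → ℝ, ∀ B : Set (Fin n → ℝ), MeasurableSet B → ∀ φ : L2Rn n,
        (M.toFun B φ : (Fin n → ℝ) → ℂ) =ᵐ[volume]
          fun x => if x + q ∈ B then φ x else 0 := by
  constructor
  · intro hext
    have hd : ∀ B, MeasurableSet B → _ := fun B hB =>
      exists_density (M.toFun B) (M.isPositive B hB)
        (boost_mul V hV (M.toFun B) (M.isPositive B hB) (fun p φ ψ => hMinv p B hB φ ψ))
    have hsw := conv_swap U hU M hMcov hd
    obtain ⟨ρ, hρ⟩ := exists_rho M hsw
    have hM : ∀ B, MeasurableSet B →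
        M.toFun B = (rhoPOVM (ρ : Measure (Fin n → ℝ))).toFun B := fun B hB =>
      povm_ext M (rhoPOVM (ρ : Measure (Fin n → ℝ)))
        (fun φ => (hρ φ).trans (rhoPOVM_meas _ φ).symm) hB
    obtain ⟨q, hq⟩ := rho_dirac U hU V hV M hext (ρ : Measure (Fin n → ℝ)) hM
    refine ⟨q, fun B hB φ => ?_⟩
    have h1 : M.toFun B φ = mulOp (rhoFun (ρ : Measure (Fin n → ℝ)) B)
        (rhoFun_meas _ hB) (rhoFun_bound _ B) φ := by
      rw [hM B hB, ← rhoOp_eq _ hB]; rfl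
    rw [h1]
    filter_upwards [mulOp_coe (rhoFun (ρ : Measure (Fin n → ℝ)) B)
        (rhoFun_meas _ hB) (rhoFun_bound _ B) φ] with x hx
    rw [hx, hq]
    unfold rhoFun Measure.real
    rw [Measure.dirac_apply' _ (hB.preimage (measurable_const_add x))]
    by_cases h : x + q ∈ B <;> simp [h]
  · rintro ⟨q, hq⟩ M₁ M₂ - - - - t t0 t1 h B hB
    have hP : ∀ φ, M.toFun B (M.toFun B φ) = M.toFun B φ := by
      intro φ
      ext1
      filter_upwards [hq B hB (M.toFun B φ), hq B hB φ] with x h1 h2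
      rw [h1, h2]
      split_ifs <;> rfl
    refine ⟨proj_extreme M M₁ M₂ hB hP t0 t1 h, ?_⟩
    refine proj_extreme M M₂ M₁ hB hP (t := 1 - t) (by linarith) (by linarith) ?_
    intro B hB
    rw [h B hB, add_comm, sub_sub_cancel]
end

section
/- Let n ≥ 1, let Z ⊆ ℤⁿ be nonempty, let H_Z be a complex Hilbert space with orthonormal basis {e_m : m ∈ Z}, and let U_Z be the unitary representation of the torus 𝕋ⁿ on H_Z defined by U_Z(w) e_m = ⟨w, m⟩ e_m, where ⟨w, m⟩ = w₁^{m₁}···w_n^{m_n}. Let M be a POVM on (𝕋ⁿ, ℬ(𝕋ⁿ)) acting on H_Z that is covariant: U_Z(w) M(B) U_Z(w)* = M(w·B) for all w ∈ 𝕋ⁿ and Borel B ⊆ 𝕋ⁿ, where w·B = {w z : z ∈ B}. Then there exists a family {ξ_m : m ∈ Z} of unit vectors in ℓ²(ℕ) such that for all k, l ∈ Z and all Borel B ⊆ 𝕋ⁿ: ⟨e_k, M(B) e_l⟩ = ⟨ξ_k, ξ_l⟩ ∫_B ⟨z, k − l⟩ dμ_n(z), where μ_n is the normalized Haar measure on 𝕋ⁿ.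 -/
open MeasureTheory Set

local notation "⟪" x ", " y "⟫" => @inner ℂ _ _ x y

noncomputable instance : MeasurableSpace Circle := borel Circle
instance : BorelSpace Circle := ⟨rfl⟩

/-- `ℓ²(ℕ)`. -/
noncomputable abbrev ell2 : Type := lp (fun _ : ℕ => ℂ) 2

/-- The character `⟨w, m⟩ = w₁^{m₁} ⋯ w_n^{m_n}` of the torus `𝕋ⁿ`. -/
noncomputable def torusChar {n : ℕ} (w : Fin n → Circle) (m : Fin n → ℤ) : ℂ :=
  ∏ i, (w i : ℂ) ^ (m i)

/-- Covariance of a POVM `M` on `𝕋ⁿ` acting on `H`: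
`U_Z(w) M(B) U_Z(w)* = M(w·B)` for all `w ∈ 𝕋ⁿ`. -/
def TorusCovariant {n : ℕ} {H : Type*} [NormedAddCommGroup H] [InnerProductSpace ℂ H]
    [CompleteSpace H] (U : (Fin n → Circle) → (H ≃ₗᵢ[ℂ] H))
    (M : POVM (Fin n → Circle) H) : Prop :=
  ∀ w : Fin n → Circle, ∀ B : Set (Fin n → Circle), MeasurableSet B →
    ∀ φ ψ : H,
      ⟪(U w φ : H), M.toFun ((fun z => w * z) '' B) (U w ψ)⟫ = ⟪φ, M.toFun B ψ⟫


lemma polar {H : Type*} [NormedAddCommGroup H] [InnerProductSpace ℂ H] (x y : H) :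
    ∃ (a : Fin 4 → ℂ) (φ : Fin 4 → H), ∀ T : H →L[ℂ] H,
      ⟪x, T y⟫ = ∑ j, a j * ⟪φ j, T (φ j)⟫ := by
  refine ⟨![1/4, -1/4, -Complex.I/4, Complex.I/4], ![x + y, x - y, x + Complex.I • y, x - Complex.I • y], fun T => ?_⟩
  simp [Fin.sum_univ_four]
  ring_nf
  simp
  ring

lemma embed {E : Type*} [NormedAddCommGroup E] [InnerProductSpace ℂ E] [CompleteSpace E]
    [TopologicalSpace.SeparableSpace E] : Nonempty (E →ₗᵢ[ℂ] ell2) := by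
  obtain ⟨w, b, hb⟩ := exists_hilbertBasis ℂ E
  have hc : Countable w := by
    apply Pairwise.countable_of_isOpen_disjoint (s := fun i : w => Metric.ball (b i) (1/2))
    · intro i j hij
      apply Metric.ball_disjoint_ball
      have h1 := b.orthonormal
      have : dist (b i) (b j) ^ 2 = 2 := by
        rw [dist_eq_norm, @norm_sub_sq ℂ]
        rw [h1.2 hij, h1.1, h1.1]; norm_num
      nlinarith [dist_nonneg (x := b i) (y := b j)]
    · intro i; exact Metric.isOpen_ball
    · intro i; exact ⟨b i, by simp⟩
  obtain ⟨f, hf⟩ := hc.exists_injective_nat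
  have ho : Orthonormal ℂ (fun i : w => (lp.single 2 (f i) (1:ℂ) : ell2)) := by
    classical
    rw [orthonormal_iff_ite]
    intro i j
    rw [lp.inner_single_left]
    simp [lp.single_apply, Pi.single_apply, hf.eq_iff]
  exact ⟨ho.orthogonalFamily.linearIsometry.comp b.repr.toLinearIsometry⟩

lemma gram {Z : Type*} [Countable Z] (c : Z → Z → ℂ) (hc : ∀ k l, star (c k l) = c l k)
    (hp : ∀ f : Z →₀ ℂ, 0 ≤ (f.sum fun k a => f.sum fun l a' => star a * a' * c k l).re) :
    ∃ ξ : Z → ell2, ∀ k l, ⟪ξ k, ξ l⟫ = c k l := by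
  let K : Matrix Z Z (ℂ →L[ℂ] ℂ) := Matrix.of fun x y => c x y • (1 : ℂ →L[ℂ] ℂ)
  have hK : K.PosSemidef := by
    have h0 := (RKHS.posSemidef_tfae (𝕜 := ℂ) (K := K)).out 0 2
    rw [h0]
    refine ⟨?_, ?_⟩
    · ext x y
      simp [K, ← hc x y]
    · intro v
      refine (hp v).trans_eq ?_
      congr 1
      refine Finsupp.sum_congr fun k _ => Finsupp.sum_congr fun l _ => ?_
      simp [K, ← hc l k]
      ring
  have : Fact K.PosSemidef := ⟨hK⟩
  let E := RKHS.OfKernel K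
  let η : Z → E := fun k => RKHS.kerFun E k (1:ℂ)
  have hη : ∀ k l, ⟪η k, η l⟫ = c k l := by
    intro k l
    have := RKHS.kernel_inner E l k (1:ℂ) (1:ℂ)
    rw [← this, RKHS.OfKernel.kernel_ofKernel]
    simp [K, ← hc l k]
  have hsep : TopologicalSpace.SeparableSpace E := by
    rw [← TopologicalSpace.isSeparable_univ_iff]
    have h1 : TopologicalSpace.IsSeparable (Set.range η) := (Set.countable_range η).isSeparable
    have h2 := (h1.span (R := ℂ)).closure
    refine h2.mono ?_
    have h3 := RKHS.kerFun_dense (𝕜 := ℂ) (X := Z) (V := ℂ) E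
    intro x _
    have hx : x ∈ Submodule.topologicalClosure (Submodule.span ℂ {RKHS.kerFun E x v | (x : Z) (v : ℂ)}) := by
      rw [h3]; trivial
    refine closure_mono ?_ hx
    refine Submodule.span_le.mpr ?_
    rintro _ ⟨z, v, rfl⟩
    have : RKHS.kerFun E z v = v • η z := by simp [η, ← map_smul]
    rw [this]
    exact Submodule.smul_mem _ _ (Submodule.subset_span ⟨z, rfl⟩)
  obtain ⟨i⟩ := embed (E := E)
  exact ⟨fun k => i (η k), fun k l => by rw [i.inner_map_map, hη]⟩


lemma POVM.empty' {Ω : Type*} [MeasurableSpace Ω] {H : Type*} [NormedAddCommGroup H]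
    [InnerProductSpace ℂ H] [CompleteSpace H] (M : POVM Ω H) (φ ψ : H) :
    ⟪φ, M.toFun ∅ ψ⟫ = 0 := by
  have h := (M.m_iUnion (fun _ => ∅) (fun _ => MeasurableSet.empty)
    (fun i j _ => by simp [Function.onFun]) φ ψ).summable
  exact tendsto_nhds_unique tendsto_const_nhds h.tendsto_atTop_zero

lemma POVM.re_nonneg {Ω : Type*} [MeasurableSpace Ω] {H : Type*} [NormedAddCommGroup H]
    [InnerProductSpace ℂ H] [CompleteSpace H] (M : POVM Ω H) (φ : H) (B : Set Ω)
    (hB : MeasurableSet B) : 0 ≤ (⟪φ, M.toFun B φ⟫).re ∧ (⟪φ, M.toFun B φ⟫).im = 0 := by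
  have h := (M.isPositive B hB).inner_nonneg_right φ
  have h2 := RCLike.nonneg_iff.mp h
  exact h2

lemma POVM.exists_measure {Ω : Type*} [MeasurableSpace Ω] {H : Type*} [NormedAddCommGroup H]
    [InnerProductSpace ℂ H] [CompleteSpace H] (M : POVM Ω H) (φ : H) :
    ∃ ρ : Measure Ω, IsFiniteMeasure ρ ∧
      ∀ B, MeasurableSet B → ⟪φ, M.toFun B φ⟫ = (ρ.real B : ℂ) := by
  let ρ : Measure Ω := Measure.ofMeasurable
    (fun B _ => ENNReal.ofReal (⟪φ, M.toFun B φ⟫).re) (by simp [M.empty']) (by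
      intro f hf hd
      have h := Complex.hasSum_re (M.m_iUnion f hf hd φ φ)
      rw [← h.tsum_eq]
      exact ENNReal.ofReal_tsum_of_nonneg (fun n => (M.re_nonneg φ _ (hf n)).1) h.summable)
  have hρ : ∀ B, MeasurableSet B → ρ B = ENNReal.ofReal (⟪φ, M.toFun B φ⟫).re :=
    fun B hB => Measure.ofMeasurable_apply B hB
  refine ⟨ρ, ⟨by rw [hρ _ MeasurableSet.univ]; exact ENNReal.ofReal_lt_top⟩, fun B hB => ?_⟩
  have h := M.re_nonneg φ B hB
  rw [Measure.real, hρ B hB, ENNReal.toReal_ofReal h.1]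
  apply Complex.ext <;> simp [h.2]

lemma torusChar_mul {n : ℕ} (w z : Fin n → Circle) (m : Fin n → ℤ) :
    torusChar (w * z) m = torusChar w m * torusChar z m := by
  simp [torusChar, mul_zpow, Finset.prod_mul_distrib]

lemma norm_torusChar {n : ℕ} (w : Fin n → Circle) (m : Fin n → ℤ) : ‖torusChar w m‖ = 1 := by
  simp [torusChar, Circle.norm_coe]

lemma torusChar_one {n : ℕ} (m : Fin n → ℤ) : torusChar 1 m = 1 := by
  simp [torusChar]

lemma continuous_torusChar {n : ℕ} (m : Fin n → ℤ) :
    Continuous (fun w : Fin n → Circle => torusChar w m) := by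
  unfold torusChar
  refine continuous_finsetProd _ fun i _ => ?_
  refine Continuous.zpow₀ (by fun_prop) _ (fun a => Or.inl (by simp))

lemma torusChar_sub {n : ℕ} (w : Fin n → Circle) (k l : Fin n → ℤ) :
    torusChar w (k - l) = torusChar w k * star (torusChar w l) := by
  have h : star (torusChar w l) = (torusChar w l)⁻¹ := by
    rw [Complex.inv_def, Complex.normSq_eq_norm_sq, norm_torusChar]; simp
  rw [h]
  simp only [torusChar, ← Finset.prod_inv_distrib, ← Finset.prod_mul_distrib]
  refine Finset.prod_congr rfl fun i _ => ?_
  rw [Pi.sub_apply, zpow_sub₀ (by simp), div_eq_mul_inv]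

lemma star_mul_torusChar {n : ℕ} (w : Fin n → Circle) (m : Fin n → ℤ) :
    star (torusChar w m) * torusChar w m = 1 := by
  have := Complex.conj_mul' (torusChar w m)
  rw [norm_torusChar] at this
  simpa using this

lemma fubini {n : ℕ} (μ ρ : Measure (Fin n → Circle)) [μ.IsHaarMeasure] [IsProbabilityMeasure μ]
    [IsFiniteMeasure ρ] (m : Fin n → ℤ) (B : Set (Fin n → Circle)) (hB : MeasurableSet B) :
    Integrable (fun w => star (torusChar w m) * (ρ.real ((fun z => w * z) '' B) : ℂ)) μ ∧
    ∫ w, star (torusChar w m) * (ρ.real ((fun z => w * z) '' B) : ℂ) ∂μ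
      = (∫ z, star (torusChar z m) ∂ρ) * ∫ z in B, torusChar z m ∂μ := by
  let F : (Fin n → Circle) → (Fin n → Circle) → ℂ := fun w z =>
    star (torusChar w m) * B.indicator (fun _ => (1:ℂ)) (z / w)
  have hχ := (continuous_torusChar (n := n) m).measurable
  have hFm : Measurable (Function.uncurry F) := by
    refine Measurable.mul ?_ ?_
    · exact (continuous_star.measurable.comp hχ).comp measurable_fst
    · exact (measurable_const.indicator hB).comp (measurable_snd.div measurable_fst)
  have hFi : Integrable (Function.uncurry F) (μ.prod ρ) := by
    refine Integrable.of_bound hFm.aestronglyMeasurable 1 (Filter.Eventually.of_forall ?_)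
    rintro ⟨w, z⟩
    simp only [Function.uncurry, F, norm_mul, norm_star, norm_torusChar, one_mul]
    refine (norm_indicator_le_norm_self _ _).trans (by simp)
  have him : ∀ w : Fin n → Circle, (fun z => w * z) '' B = (fun z => z / w) ⁻¹' B := by
    intro w
    ext z
    constructor
    · rintro ⟨y, hy, rfl⟩
      simpa using hy
    · intro hz
      exact ⟨z / w, hz, by simp⟩
  have h1 : ∀ w, ∫ z, F w z ∂ρ = star (torusChar w m) * (ρ.real ((fun z => w * z) '' B) : ℂ) := by
    intro w
    simp only [F]
    rw [integral_const_mul, him]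
    congr 1
    have : (fun a : Fin n → Circle => B.indicator (fun _ => (1:ℂ)) (a / w))
      = ((fun z => z / w) ⁻¹' B).indicator (fun _ => (1:ℂ)) := by
      ext a; rfl
    have hm : MeasurableSet ((fun z => z / w) ⁻¹' B) := (measurable_id.div_const w) hB
    rw [this, integral_indicator_const _ hm]
    simp
  have h2 : ∀ z, ∫ w, F w z ∂μ = star (torusChar z m) * ∫ u in B, torusChar u m ∂μ := by
    intro z
    have h3 := integral_div_left_eq_self (fun u => F (z / u) z) μ z
    simp only [div_div_cancel] at h3
    rw [h3, ← integral_indicator hB, ← integral_const_mul]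
    congr 1
    ext u
    simp only [F, div_div_cancel]
    by_cases hu : u ∈ B
    · simp only [Set.indicator_of_mem hu, mul_one]
      have h4 : torusChar z m = torusChar (z / u) m * torusChar u m := by
        rw [← torusChar_mul]; simp
      rw [h4, star_mul', mul_assoc, star_mul_torusChar, mul_one]
    · simp [hu]
  constructor
  · have := hFi.integral_prod_left
    simpa only [Function.uncurry, h1] using this
  · simp_rw [← h1]
    rw [integral_integral_swap hFi]
    simp_rw [h2]
    rw [integral_mul_const]

theorem stmt7 (n : ℕ) (hn : 1 ≤ n) (Z : Set (Fin n → ℤ)) (hZ : Z.Nonempty)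
    (H : Type*) [NormedAddCommGroup H] [InnerProductSpace ℂ H] [CompleteSpace H]
    -- an orthonormal basis of `H_Z` indexed by `Z`
    (b : HilbertBasis Z ℂ H)
    -- the normalized Haar measure on `𝕋ⁿ`
    (μ : Measure (Fin n → Circle)) (hHaar : μ.IsHaarMeasure) (hProb : IsProbabilityMeasure μ)
    -- the representation `U_Z(w) e_m = ⟨w, m⟩ e_m`
    (U : (Fin n → Circle) → (H ≃ₗᵢ[ℂ] H))
    (hU : ∀ w : Fin n → Circle, ∀ m : Z, U w (b m) = torusChar w (m : Fin n → ℤ) • b m)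
    (M : POVM (Fin n → Circle) H)
    (hMcov : TorusCovariant U M) :
    ∃ ξ : Z → ell2, (∀ m : Z, ‖ξ m‖ = 1) ∧
      ∀ k l : Z, ∀ B : Set (Fin n → Circle), MeasurableSet B →
        ⟪b k, M.toFun B (b l)⟫
          = ⟪ξ k, ξ l⟫ * ∫ z in B, torusChar z ((k : Fin n → ℤ) - l) ∂μ := by
  classical
  have key : ∀ k l : Z, ∃ c : ℂ, ∀ B : Set (Fin n → Circle), MeasurableSet B →
      ⟪b k, M.toFun B (b l)⟫ = c * ∫ z in B, torusChar z ((k : Fin n → ℤ) - l) ∂μ := by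
    intro k l
    obtain ⟨a, φ, hpol⟩ := polar (b k) (b l)
    choose ρ hfin hρ using fun j => M.exists_measure (φ j)
    refine ⟨∑ j, a j * ∫ z, star (torusChar z ((k : Fin n → ℤ) - l)) ∂(ρ j), fun B hB => ?_⟩
    have hmeas : ∀ w : Fin n → Circle, MeasurableSet ((fun z => w * z) '' B) := by
      intro w
      exact (Homeomorph.mulLeft w).toMeasurableEquiv.measurableSet_image.mpr hB
    have h1 : ∀ w : Fin n → Circle, star (torusChar w ((k : Fin n → ℤ) - l)) *
        ⟪b k, M.toFun ((fun z => w * z) '' B) (b l)⟫ = ⟪b k, M.toFun B (b l)⟫ := by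
      intro w
      rw [← hMcov w B hB, hU, hU, torusChar_sub, map_smul, inner_smul_left, inner_smul_right]
      simp
      ring
    have h2 : ∀ w : Fin n → Circle, ⟪b k, M.toFun B (b l)⟫ =
        ∑ j, a j * (star (torusChar w ((k : Fin n → ℤ) - l)) *
          ((ρ j).real ((fun z => w * z) '' B) : ℂ)) := by
      intro w
      rw [← h1 w, hpol, Finset.mul_sum]
      refine Finset.sum_congr rfl fun j _ => ?_
      rw [hρ j _ (hmeas w)]
      ring
    have h3 : ⟪b k, M.toFun B (b l)⟫ = ∫ _w, ⟪b k, M.toFun B (b l)⟫ ∂μ := by simp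
    rw [h3, integral_congr_ae (Filter.Eventually.of_forall h2), integral_finsetSum]
    · rw [Finset.sum_mul]
      refine Finset.sum_congr rfl fun j _ => ?_
      rw [integral_const_mul, (fubini μ (ρ j) _ B hB).2, mul_assoc]
    · intro j _
      exact (fubini μ (ρ j) _ B hB).1.const_mul _
  choose c hc using key
  let s : ℕ → Set (Fin n → Circle) := fun j => Metric.ball 1 (1 / ((j : ℝ) + 1))
  have hs : ∀ j, MeasurableSet (s j) := fun j => measurableSet_ball
  have hpos : ∀ j, 0 < μ.real (s j) := by
    intro j
    refine ENNReal.toReal_pos ?_ (measure_ne_top _ _)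
    exact (Metric.measure_ball_pos μ _ (by positivity)).ne'
  have hsm : Filter.Tendsto s Filter.atTop (nhds (1 : Fin n → Circle)).smallSets := by
    rw [Metric.nhds_basis_ball.smallSets.tendsto_right_iff]
    intro ε hε
    have h := tendsto_one_div_add_atTop_nhds_zero_nat (𝕜 := ℝ)
    filter_upwards [h.eventually (gt_mem_nhds hε)] with j hj
    exact Metric.ball_subset_ball hj.le
  have hq : ∀ m : Fin n → ℤ, Filter.Tendsto
      (fun j => (∫ z in s j, torusChar z m ∂μ) / (μ.real (s j) : ℂ)) Filter.atTop (nhds 1) := by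
    intro m
    have h := (continuous_torusChar m).continuousAt.integral_sub_linear_isLittleO_ae (μ := μ)
      (x := 1) ((continuous_torusChar m).stronglyMeasurable.stronglyMeasurableAtFilter) hsm
    have h' : (fun j => (∫ z in s j, torusChar z m ∂μ) - (μ.real (s j) : ℂ))
        =o[Filter.atTop] (fun j => (μ.real (s j) : ℂ)) := by
      rw [← Asymptotics.isLittleO_norm_right]
      rw [← Asymptotics.isLittleO_norm_right] at h
      simpa [torusChar_one] using h
    have h2 := h'.tendsto_div_nhds_zero.add_const 1
    rw [zero_add] at h2
    refine h2.congr fun j => ?_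
    have := (hpos j).ne'
    have h3 : (μ.real (s j) : ℂ) ≠ 0 := by exact_mod_cast this
    field_simp
    ring
  have hg : ∀ k l : Z, Filter.Tendsto
      (fun j => ⟪b k, M.toFun (s j) (b l)⟫ / (μ.real (s j) : ℂ)) Filter.atTop (nhds (c k l)) := by
    intro k l
    have h := (hq ((k : Fin n → ℤ) - l)).const_mul (c k l)
    rw [mul_one] at h
    refine h.congr fun j => ?_
    rw [hc k l _ (hs j), mul_div_assoc]
  have hherm : ∀ k l, star (c k l) = c l k := by
    intro k l
    refine tendsto_nhds_unique ((continuous_star.tendsto _).comp (hg k l)) ((hg l k).congr ?_)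
    intro j
    have h1 := (M.isPositive (s j) (hs j)).isSymmetric (b l) (b k)
    simp only [Function.comp, star_div₀]
    congr 1
    · rw [← starRingEnd_apply, inner_conj_symm]
      exact h1.symm
    · simp
  have hpsd : ∀ f : Z →₀ ℂ,
      0 ≤ (f.sum fun k a => f.sum fun l a' => star a * a' * c k l).re := by
    intro f
    have ht : Filter.Tendsto (fun j => (f.sum fun k a => f.sum fun l a' =>
        star a * a' * (⟪b k, M.toFun (s j) (b l)⟫ / (μ.real (s j) : ℂ))).re) Filter.atTop
        (nhds (f.sum fun k a => f.sum fun l a' => star a * a' * c k l).re) := by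
      refine (Complex.continuous_re.tendsto _).comp ?_
      refine tendsto_finsetSum _ fun k _ => tendsto_finsetSum _ fun l _ => ?_
      exact (hg k l).const_mul _
    refine ge_of_tendsto' ht fun j => ?_
    let v : H := f.sum fun k a => a • b k
    have hv : (f.sum fun k a => f.sum fun l a' =>
        star a * a' * (⟪b k, M.toFun (s j) (b l)⟫ / (μ.real (s j) : ℂ)))
        = ⟪v, M.toFun (s j) v⟫ / (μ.real (s j) : ℂ) := by
      simp only [v, Finsupp.sum, map_sum, sum_inner, inner_sum, Finset.sum_div]
      rw [Finset.sum_comm]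
      refine Finset.sum_congr rfl fun k _ => Finset.sum_congr rfl fun l _ => ?_
      rw [map_smul, inner_smul_left, inner_smul_right, starRingEnd_apply]
      ring
    rw [hv, Complex.div_ofReal_re]
    exact div_nonneg (M.re_nonneg v _ (hs j)).1 (hpos j).le
  obtain ⟨ξ, hξ⟩ := gram c hherm hpsd
  refine ⟨ξ, fun m => ?_, fun k l B hB => by rw [hξ, hc k l B hB]⟩
  have h1 := hc m m Set.univ MeasurableSet.univ
  have h2 : ∀ z : Fin n → Circle, torusChar z ((m : Fin n → ℤ) - m) = 1 := by
    intro z; simp [torusChar]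
  simp only [M.normalized, h2] at h1
  have hb : ‖b m‖ = 1 := b.orthonormal.1 m
  simp [hb] at h1
  have h3 := hξ m m
  rw [← h1, inner_self_eq_norm_sq_to_K] at h3
  have h4 : ‖ξ m‖ ^ 2 = 1 := by
    have h5 := congrArg Complex.re h3
    rw [Complex.one_re] at h5
    rw [← h5]
    norm_cast
  nlinarith [norm_nonneg (ξ m)]
end

section
/- Let n ≥ 1, let Z ⊆ ℤⁿ be nonempty, let H_Z be a complex Hilbert space with orthonormal basis {e_m : m ∈ Z}, and let {ξ_m : m ∈ Z} be any family of unit vectors in ℓ²(ℕ). Then there exists a POVM M on (𝕋ⁿ, ℬ(𝕋ⁿ)) acting on H_Z such that ⟨e_k, M(B) e_l⟩ = ⟨ξ_k, ξ_l⟩ ∫_B ⟨z, k − l⟩ dμ_n(z) for all k, l ∈ Z and Borel B ⊆ 𝕋ⁿ, and this M is covariant with respect to U_Z: U_Z(w) M(B) U_Z(w)* = M(w·B) for all w ∈ 𝕋ⁿ and all Borel B ⊆ 𝕋ⁿ. -/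
open MeasureTheory Set

local notation "⟪" x ", " y "⟫" => @inner ℂ _ _ x y

lemma tc_cont {n : ℕ} (m : Fin n → ℤ) : Continuous (fun z : Fin n → Circle => torusChar z m) := by
  unfold torusChar
  refine continuous_finsetProd _ fun i _ => ?_
  exact Continuous.zpow₀ (by fun_prop) _ (fun z => Or.inl (Circle.coe_ne_zero _))

lemma tc_norm {n : ℕ} (z : Fin n → Circle) (m : Fin n → ℤ) : ‖torusChar z m‖ = 1 := by
  simp [torusChar, norm_prod, norm_zpow, Circle.norm_coe]

lemma tc_mul {n : ℕ} (z w : Fin n → Circle) (m : Fin n → ℤ) :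
    torusChar (w * z) m = torusChar w m * torusChar z m := by
  simp [torusChar, mul_zpow, Finset.prod_mul_distrib]

lemma tc_sub {n : ℕ} (z : Fin n → Circle) (k l : Fin n → ℤ) :
    torusChar z (k - l) = torusChar z k * (starRingEnd ℂ) (torusChar z l) := by
  simp only [torusChar, map_prod, ← Finset.prod_mul_distrib]
  refine Finset.prod_congr rfl fun i _ => ?_
  rw [Pi.sub_apply, zpow_sub₀ (Circle.coe_ne_zero _), map_zpow₀, ← Circle.coe_inv_eq_conj,
    Circle.coe_inv, inv_zpow, div_eq_mul_inv]

lemma tc_self {n : ℕ} (z : Fin n → Circle) (m : Fin n → ℤ) :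
    torusChar z m * (starRingEnd ℂ) (torusChar z m) = 1 := by
  rw [← tc_sub, sub_self]; simp [torusChar]

lemma tc_int {n : ℕ} (μ : Measure (Fin n → Circle)) [μ.IsHaarMeasure] (m : Fin n → ℤ)
    (hm : m ≠ 0) : ∫ z, torusChar z m ∂μ = 0 := by
  obtain ⟨i, hi⟩ := Function.ne_iff.mp hm
  have hi' : (m i : ℂ) ≠ 0 := by exact_mod_cast hi
  set w : Fin n → Circle := Pi.mulSingle i (Circle.exp (Real.pi / m i)) with hw
  have h1 : torusChar w m = -1 := by
    unfold torusChar
    rw [Finset.prod_eq_single i]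
    · simp only [hw, Pi.mulSingle_eq_same, Circle.coe_exp, ← Complex.exp_int_mul]
      rw [← Complex.exp_pi_mul_I]
      congr 1
      push_cast
      field_simp
    · intro j _ hj
      simp [hw, Pi.mulSingle_eq_of_ne hj]
    · simp
  have h2 := integral_mul_left_eq_self (μ := μ) (fun z => torusChar z m) w
  simp only [tc_mul, h1] at h2
  rw [integral_const_mul] at h2
  linear_combination (-1/2 : ℂ) * h2

lemma tc_image {n : ℕ} (μ : Measure (Fin n → Circle)) [μ.IsHaarMeasure] (m : Fin n → ℤ)
    (w : Fin n → Circle) (B : Set (Fin n → Circle)) :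
    ∫ z in (fun z => w * z) '' B, torusChar z m ∂μ
      = torusChar w m * ∫ z in B, torusChar z m ∂μ := by
  rw [(measurePreserving_mul_left μ w).setIntegral_image_emb (measurableEmbedding_mulLeft w)]
  simp only [tc_mul]
  rw [integral_const_mul]

lemma op_ext {ι H : Type*} [NormedAddCommGroup H] [InnerProductSpace ℂ H] [CompleteSpace H]
    (b : HilbertBasis ι ℂ H) (T S : H →L[ℂ] H)
    (h : ∀ k l, ⟪b k, T (b l)⟫ = ⟪b k, S (b l)⟫) : T = S := by
  have hd : Dense (Submodule.span ℂ (Set.range b) : Set H) := by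
    rw [Submodule.dense_iff_topologicalClosure_eq_top]; exact b.dense_span
  refine ContinuousLinearMap.ext_on hd ?_
  rintro _ ⟨l, rfl⟩
  apply b.repr.injective
  ext k
  rw [b.repr_apply_apply, b.repr_apply_apply, h]

lemma vec_memLp {n : ℕ} (μ : Measure (Fin n → Circle)) [IsProbabilityMeasure μ]
    (m : Fin n → ℤ) (x : ell2) :
    MemLp (fun z => (starRingEnd ℂ) (torusChar z m) • x) 2 μ := by
  refine MemLp.of_bound (C := ‖x‖) ?_ (Filter.Eventually.of_forall fun z => ?_)
  · exact ((Complex.continuous_conj.comp (tc_cont m)).smul continuous_const).aestronglyMeasurable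
  · rw [norm_smul, RCLike.norm_conj, tc_norm, one_mul]

noncomputable def vec {n : ℕ} (μ : Measure (Fin n → Circle)) [IsProbabilityMeasure μ]
    (m : Fin n → ℤ) (x : ell2) : Lp ell2 2 μ := (vec_memLp μ m x).toLp _

lemma vec_setInner {n : ℕ} (μ : Measure (Fin n → Circle)) [IsProbabilityMeasure μ]
    (k l : Fin n → ℤ) (x y : ell2) (B : Set (Fin n → Circle)) :
    ∫ z in B, ⟪vec μ k x z, vec μ l y z⟫ ∂μ = ⟪x, y⟫ * ∫ z in B, torusChar z (k - l) ∂μ := by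
  rw [← integral_const_mul]
  apply integral_congr_ae
  apply ae_restrict_of_ae
  filter_upwards [(vec_memLp μ k x).coeFn_toLp, (vec_memLp μ l y).coeFn_toLp] with z h1 h2
  unfold vec
  rw [h1, h2, inner_smul_left, inner_smul_right, tc_sub, Complex.conj_conj]
  ring

lemma exists_povm {Ω H : Type*} [MeasurableSpace Ω] (μ : Measure Ω)
    [NormedAddCommGroup H] [InnerProductSpace ℂ H] [CompleteSpace H]
    (V : H →ₗᵢ[ℂ] Lp ell2 2 μ) :
    ∃ M : POVM Ω H, ∀ B, MeasurableSet B → ∀ φ ψ : H,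
      ⟪φ, M.toFun B ψ⟫ = ∫ z in B, ⟪V φ z, V ψ z⟫ ∂μ := by
  let R : (B : Set Ω) → (H →L[ℂ] Lp ell2 2 (μ.restrict B)) := fun B =>
    (LpToLpRestrictCLM Ω ell2 ℂ μ 2 B).comp V.toContinuousLinearMap
  let T : Set Ω → (H →L[ℂ] H) := fun B => (ContinuousLinearMap.adjoint (R B)).comp (R B)
  have hT : ∀ B, ∀ φ ψ : H, ⟪φ, T B ψ⟫ = ∫ z in B, ⟪V φ z, V ψ z⟫ ∂μ := by
    intro B φ ψ
    simp only [T, ContinuousLinearMap.comp_apply, ContinuousLinearMap.adjoint_inner_right]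
    rw [L2.inner_def]
    apply integral_congr_ae
    filter_upwards [LpToLpRestrictCLM_coeFn ℂ B (V φ), LpToLpRestrictCLM_coeFn ℂ B (V ψ)]
      with z h1 h2
    simp only [R, ContinuousLinearMap.comp_apply, LinearIsometry.coe_toContinuousLinearMap]
    rw [h1, h2]
  refine ⟨⟨T, ?_, ?_, ?_⟩, fun B _ => hT B⟩
  · intro B _
    exact ContinuousLinearMap.isPositive_adjoint_comp_self (R B)
  · ext ψ
    refine ext_inner_left ℂ fun φ => ?_
    rw [hT, Measure.restrict_univ, ← L2.inner_def, V.inner_map_map]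
    rfl
  · intro B hB hd φ ψ
    simp only [hT]
    exact hasSum_integral_iUnion hB hd (L2.integrable_inner (V φ) (V ψ)).integrableOn

theorem stmt8 (n : ℕ) (hn : 1 ≤ n) (Z : Set (Fin n → ℤ)) (hZ : Z.Nonempty)
    (H : Type*) [NormedAddCommGroup H] [InnerProductSpace ℂ H] [CompleteSpace H]
    (b : HilbertBasis Z ℂ H)
    (μ : Measure (Fin n → Circle)) (hHaar : μ.IsHaarMeasure) (hProb : IsProbabilityMeasure μ)
    (U : (Fin n → Circle) → (H ≃ₗᵢ[ℂ] H))
    (hU : ∀ w : Fin n → Circle, ∀ m : Z, U w (b m) = torusChar w (m : Fin n → ℤ) • b m)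
    -- an arbitrary family of unit vectors in `ℓ²(ℕ)`
    (ξ : Z → ell2) (hξ : ∀ m : Z, ‖ξ m‖ = 1) :
    ∃ M : POVM (Fin n → Circle) H,
      (∀ k l : Z, ∀ B : Set (Fin n → Circle), MeasurableSet B →
        ⟪b k, M.toFun B (b l)⟫
          = ⟪ξ k, ξ l⟫ * ∫ z in B, torusChar z ((k : Fin n → ℤ) - l) ∂μ) ∧
      TorusCovariant U M := by
  have hon : Orthonormal ℂ (fun m : Z => vec μ (m : Fin n → ℤ) (ξ m)) := by
    classical
    rw [orthonormal_iff_ite]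
    intro k l
    rw [L2.inner_def, ← setIntegral_univ, vec_setInner, setIntegral_univ]
    split_ifs with h
    · subst h
      rw [inner_self_eq_norm_sq_to_K, hξ]
      simp [torusChar]
    · rw [tc_int, mul_zero]
      exact sub_ne_zero.mpr fun h' => h (Subtype.ext h')
  let V : H →ₗᵢ[ℂ] Lp ell2 2 μ :=
    hon.orthogonalFamily.linearIsometry.comp b.repr.toLinearIsometry
  have hV : ∀ m, V (b m) = vec μ (m : Fin n → ℤ) (ξ m) := by
    classical
    intro m
    change hon.orthogonalFamily.linearIsometry (b.repr (b m)) = _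
    rw [b.repr_self]
    refine (hon.orthogonalFamily.linearIsometry_apply_single (i := m) (1 : ℂ)).trans ?_
    simp
  obtain ⟨M, hM⟩ := exists_povm μ V
  have hb : ∀ k l : Z, ∀ B : Set (Fin n → Circle), MeasurableSet B →
        ⟪b k, M.toFun B (b l)⟫
          = ⟪ξ k, ξ l⟫ * ∫ z in B, torusChar z ((k : Fin n → ℤ) - l) ∂μ := by
    intro k l B hB
    rw [hM B hB, hV, hV, vec_setInner]
  refine ⟨M, hb, ?_⟩
  intro w B hB φ ψ
  have hwB : MeasurableSet ((fun z => w * z) '' B) :=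
    (measurableEmbedding_mulLeft w).measurableSet_image.mpr hB
  let Uw : H →L[ℂ] H := (U w).toLinearIsometry.toContinuousLinearMap
  have key : (ContinuousLinearMap.adjoint Uw).comp ((M.toFun ((fun z => w * z) '' B)).comp Uw)
      = M.toFun B := by
    refine op_ext b _ _ fun k l => ?_
    rw [ContinuousLinearMap.comp_apply, ContinuousLinearMap.adjoint_inner_right,
      ContinuousLinearMap.comp_apply]
    change ⟪U w (b k), M.toFun _ (U w (b l))⟫ = _
    rw [hU, hU, map_smul, inner_smul_left, inner_smul_right, hb k l _ hwB, hb k l B hB,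
      tc_image, tc_sub w]
    have h1 := tc_self w (k : Fin n → ℤ)
    have h2 := tc_self w (l : Fin n → ℤ)
    generalize ∫ z in B, torusChar z ((k : Fin n → ℤ) - l) ∂μ = I
    linear_combination (⟪ξ k, ξ l⟫ * I * torusChar w l * (starRingEnd ℂ) (torusChar w l)) * h1
      + ⟪ξ k, ξ l⟫ * I * h2
  rw [← key, ContinuousLinearMap.comp_apply, ContinuousLinearMap.adjoint_inner_right,
    ContinuousLinearMap.comp_apply]
  rfl
end

section
/- Let H be a complex Hilbert space with orthonormal basis {e_k : k ∈ ℕ} and let Φ be the canonical phase observable, i.e. the POVM on (𝕋, ℬ(𝕋)) acting on H determined by ⟨e_k, Φ(B) e_l⟩ = ∫_B z^{k−l} dμ(z) for all k, l ∈ ℕ and Borel B ⊆ 𝕋, where μ is the normalized Haar measure on 𝕋. Then Φ is an extreme point of the convex set of ALL POVMs on (𝕋, ℬ(𝕋)) acting on H. -/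
open MeasureTheory Set

local notation "⟪" x ", " y "⟫" => @inner ℂ _ _ x y

open scoped ComplexConjugate in
theorem posCS {H : Type*} [NormedAddCommGroup H] [InnerProductSpace ℂ H] [CompleteSpace H]
    (T : H →L[ℂ] H) (hT : T.IsPositive) (x y : H) :
    ‖⟪x, T y⟫‖ ^ 2 ≤ (⟪x, T x⟫).re * (⟪y, T y⟫).re := by
  let c : PreInnerProductSpace.Core ℂ H :=
    { inner := fun x y => ⟪x, T y⟫
      conj_inner_symm := by
        intro x y
        show (starRingEnd ℂ) ⟪y, T x⟫ = ⟪x, T y⟫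
        rw [inner_conj_symm, hT.inner_left_eq_inner_right]
      re_inner_nonneg := fun x => hT.re_inner_nonneg_right x
      add_left := by
        intro x y z
        show ⟪x + y, T z⟫ = ⟪x, T z⟫ + ⟪y, T z⟫
        rw [inner_add_left]
      smul_left := by
        intro x y r
        show ⟪r • x, T y⟫ = (starRingEnd ℂ) r * ⟪x, T y⟫
        rw [inner_smul_left] }
  have h := @InnerProductSpace.Core.inner_mul_inner_self_le ℂ H _ _ _ c x y
  have h2 : ‖⟪x, T y⟫‖ * ‖⟪y, T x⟫‖ ≤ (⟪x, T x⟫).re * (⟪y, T y⟫).re := h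
  have h3 : ‖⟪y, T x⟫‖ = ‖⟪x, T y⟫‖ := by
    rw [← hT.inner_left_eq_inner_right, norm_inner_symm]
  rw [h3] at h2
  rw [sq]; exact h2

theorem circPow (z w : Circle) (k : ℕ) : ‖(z : ℂ) ^ k - (w : ℂ) ^ k‖ ≤ k * ‖(z : ℂ) - w‖ := by
  induction k with
  | zero => simp
  | succ k ih =>
    have : (z : ℂ) ^ (k+1) - (w : ℂ) ^ (k+1)
      = (z : ℂ) ^ k * (z - w) + ((z : ℂ) ^ k - (w : ℂ) ^ k) * w := by ring
    rw [this]
    refine (norm_add_le _ _).trans ?_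
    rw [norm_mul, norm_mul, norm_pow, Circle.norm_coe, Circle.norm_coe]
    push_cast
    rw [one_pow]
    linarith

theorem circZPow (z w : Circle) (n : ℤ) :
    ‖(z : ℂ) ^ n - (w : ℂ) ^ n‖ ≤ |(n : ℝ)| * ‖(z : ℂ) - w‖ := by
  obtain ⟨k, rfl | rfl⟩ := n.eq_nat_or_neg
  · simpa using circPow z w k
  · have hz : (z : ℂ) ^ k ≠ 0 := by simp
    have hw : (w : ℂ) ^ k ≠ 0 := by simp
    have : (z : ℂ) ^ (-(k:ℤ)) - (w : ℂ) ^ (-(k:ℤ))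
        = - (((z : ℂ) ^ k - (w : ℂ) ^ k) / ((z : ℂ) ^ k * (w : ℂ) ^ k)) := by
      rw [zpow_neg, zpow_neg, zpow_natCast, zpow_natCast]
      field_simp
      ring
    rw [this, norm_neg, norm_div, norm_mul, norm_pow, norm_pow, Circle.norm_coe, Circle.norm_coe]
    simpa using circPow z w k

theorem circCont (n : ℤ) : Continuous (fun z : Circle => (z : ℂ) ^ n) := by
  refine Continuous.zpow₀ (by fun_prop) n ?_
  intro z; left; simp

theorem circInt (ν : Measure Circle) [IsFiniteMeasure ν] (n : ℤ) :
    Integrable (fun z : Circle => (z : ℂ) ^ n) ν := by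
  refine Integrable.of_bound (circCont n).aestronglyMeasurable 1 ?_
  filter_upwards with z
  rw [norm_zpow, Circle.norm_coe, one_zpow]

/-- the bounded continuous power function -/
noncomputable def circB (n : ℤ) : BoundedContinuousFunction Circle ℂ :=
  BoundedContinuousFunction.mkOfCompact ⟨fun z : Circle => (z : ℂ) ^ n, circCont n⟩

theorem circB_apply (n : ℤ) (z : Circle) : circB n z = (z : ℂ) ^ n := rfl

theorem circExt (ν₁ ν₂ : Measure Circle) [IsFiniteMeasure ν₁] [IsFiniteMeasure ν₂]
    (h : ∀ n : ℤ, ∫ z : Circle, (z : ℂ) ^ n ∂ν₁ = ∫ z : Circle, (z : ℂ) ^ n ∂ν₂) : ν₁ = ν₂ := by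
  have hmul : ∀ m n, circB m * circB n = circB (m + n) := by
    intro m n
    ext z
    simp [circB_apply, zpow_add₀]
  let S : StarSubalgebra ℂ (BoundedContinuousFunction Circle ℂ) :=
    { carrier := Submodule.span ℂ (range circB)
      mul_mem' := by
        intro f g hf hg
        have : Submodule.span ℂ (range circB) * Submodule.span ℂ (range circB)
            ≤ Submodule.span ℂ (range circB) := by
          rw [Submodule.span_mul_span]
          refine Submodule.span_mono ?_
          rintro _ ⟨_, ⟨m, rfl⟩, _, ⟨n, rfl⟩, rfl⟩
          exact ⟨m + n, (hmul m n).symm⟩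
        exact this (Submodule.mul_mem_mul hf hg)
      add_mem' := fun hf hg => Submodule.add_mem _ hf hg
      algebraMap_mem' := by
        intro r
        have : algebraMap ℂ (BoundedContinuousFunction Circle ℂ) r = r • circB 0 := by
          ext z
          simp [circB_apply]
        rw [this]
        exact Submodule.smul_mem _ _ (Submodule.subset_span ⟨0, rfl⟩)
      star_mem' := by
        intro f hf
        have hf' : f ∈ Submodule.span ℂ (range circB) := hf
        show star f ∈ Submodule.span ℂ (range circB)
        induction hf' using Submodule.span_induction with
        | mem x hx =>
          obtain ⟨n, rfl⟩ := hx
          refine Submodule.subset_span ⟨-n, ?_⟩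
          ext z
          simp [circB_apply, ← Circle.coe_inv_eq_conj]
        | zero => simp
        | add x y hx hy h1 h2 => rw [star_add]; exact Submodule.add_mem _ (h1 hx) (h2 hy)
        | smul a x hx h1 => rw [star_smul]; exact Submodule.smul_mem _ _ (h1 hx) }
  refine ext_of_forall_mem_subalgebra_integral_eq_of_polish (𝕜 := ℂ) (A := S) ?_ ?_
  · intro x y hxy
    refine ⟨fun z => (z : ℂ) ^ (1 : ℤ), ⟨_, ⟨circB 1, Submodule.subset_span ⟨1, rfl⟩, rfl⟩, rfl⟩, ?_⟩
    simpa using fun h => hxy (Circle.ext h)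
  · intro g hg
    have hg' : g ∈ Submodule.span ℂ (range circB) := hg
    induction hg' using Submodule.span_induction with
    | mem x hx => obtain ⟨n, rfl⟩ := hx; exact h n
    | zero => simp
    | add x y hx hy h1 h2 =>
      simp only [BoundedContinuousFunction.coe_add, Pi.add_apply]
      rw [integral_add (x.integrable _) (y.integrable _), integral_add (x.integrable _) (y.integrable _),
        h1 hx, h2 hy]
    | smul a x hx h1 =>
      simp only [BoundedContinuousFunction.coe_smul]
      rw [integral_smul, integral_smul, h1 hx]

section
variable {H : Type*} [NormedAddCommGroup H] [InnerProductSpace ℂ H] [CompleteSpace H]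

theorem POVM.empty'_s11 (M : POVM Circle H) (x y : H) : ⟪x, M.toFun ∅ y⟫ = 0 := by
  have h := M.m_iUnion (fun _ => ∅) (fun _ => MeasurableSet.empty)
    (fun i j _ => by simp [Function.onFun]) x y
  simpa using (summable_const_iff (β := ℕ) _).1 h.summable

theorem POVM.exMeas (M : POVM Circle H) (x : H) :
    ∃ m : Measure Circle, IsFiniteMeasure m ∧ ∀ B, MeasurableSet B →
      ((m.real B : ℝ) : ℂ) = ⟪x, M.toFun B x⟫ := by
  have hpos : ∀ B, MeasurableSet B → 0 ≤ (⟪x, M.toFun B x⟫).re :=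
    fun B hB => (M.isPositive B hB).re_inner_nonneg_right x
  let m : Measure Circle := Measure.ofMeasurable
    (fun B _ => ENNReal.ofReal (⟪x, M.toFun B x⟫).re)
    (by simp [M.empty'_s11])
    (by
      intro f hf hd
      have h := Complex.hasSum_re (M.m_iUnion f hf hd x x)
      rw [← h.tsum_eq]
      exact ENNReal.ofReal_tsum_of_nonneg (fun n => hpos _ (hf n)) h.summable)
  have hm : ∀ B, MeasurableSet B → m B = ENNReal.ofReal (⟪x, M.toFun B x⟫).re :=
    fun B hB => Measure.ofMeasurable_apply B hB
  refine ⟨m, ⟨by rw [hm _ MeasurableSet.univ]; exact ENNReal.ofReal_lt_top⟩, ?_⟩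
  intro B hB
  rw [Measure.real, hm B hB, ENNReal.toReal_ofReal (hpos B hB)]
  have := (M.isPositive B hB).inner_nonneg_right x
  rw [Complex.le_def] at this
  apply Complex.ext
  · simp
  · simpa using this.2

variable (b : HilbertBasis ℕ ℂ H) (μ : Measure Circle) [IsProbabilityMeasure μ]
  (Φ M : POVM Circle H)

theorem phiBound
    (hΦ : ∀ k l : ℕ, ∀ B : Set Circle, MeasurableSet B →
      ⟪b k, Φ.toFun B (b l)⟫ = ∫ z in B, (z : ℂ) ^ ((k : ℤ) - (l : ℤ)) ∂μ)
    (B : Set Circle) (hB : MeasurableSet B) (w : Circle) (δ : ℝ)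
    (hδ : ∀ z ∈ B, ‖(z : ℂ) - w‖ ≤ δ) (k : ℕ) :
    (⟪b k - (w : ℂ) ^ (-(k : ℤ)) • b 0, Φ.toFun B (b k - (w : ℂ) ^ (-(k : ℤ)) • b 0)⟫).re
      ≤ (k * δ) ^ 2 * μ.real B := by
  have e : ⟪b k - (w : ℂ) ^ (-(k : ℤ)) • b 0, Φ.toFun B (b k - (w : ℂ) ^ (-(k : ℤ)) • b 0)⟫
      = ∫ z in B, ((z : ℂ) ^ (k : ℤ) - (w : ℂ) ^ (k : ℤ)) *
          ((z : ℂ) ^ (-(k : ℤ)) - (w : ℂ) ^ (-(k : ℤ))) ∂μ := by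
    have hw : (w : ℂ) ^ (k : ℤ) * (w : ℂ) ^ (-(k : ℤ)) = 1 := by
      rw [← zpow_add₀ (by simp)]; simp
    have e1 : ∀ z : Circle, ((z : ℂ) ^ (k : ℤ) - (w : ℂ) ^ (k : ℤ)) *
          ((z : ℂ) ^ (-(k : ℤ)) - (w : ℂ) ^ (-(k : ℤ)))
        = (z : ℂ) ^ ((k : ℤ) - k) - (w : ℂ) ^ (-(k : ℤ)) * (z : ℂ) ^ ((k : ℤ) - (0 : ℕ))
          - ((w : ℂ) ^ (k : ℤ) * (z : ℂ) ^ (((0 : ℕ) : ℤ) - k)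
            - (z : ℂ) ^ (((0 : ℕ) : ℤ) - (0 : ℕ))) := by
      intro z
      have hz : (z : ℂ) ^ (k : ℤ) * (z : ℂ) ^ (-(k : ℤ)) = 1 := by
        rw [← zpow_add₀ (by simp)]; simp
      simp only [sub_self, Nat.cast_zero, sub_zero, zero_sub, zpow_zero]
      linear_combination hz + hw
    have hc : (starRingEnd ℂ) ((w : ℂ) ^ (-(k : ℤ))) = (w : ℂ) ^ (k : ℤ) := by
      rw [map_zpow₀, ← Circle.coe_inv_eq_conj]; simp
    simp_rw [e1]
    have I := fun n : ℤ => circInt (μ.restrict B) n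
    have J : ∀ (c : ℂ) (n : ℤ), Integrable (fun z : Circle => c * (z : ℂ) ^ n) (μ.restrict B) :=
      fun c n => (I n).const_mul c
    have K1 : ∀ (c : ℂ) (m n : ℤ), Integrable (fun z : Circle => (z : ℂ) ^ m - c * (z : ℂ) ^ n)
      (μ.restrict B) := fun c m n => (I m).sub (J c n)
    have K2 : ∀ (c : ℂ) (m n : ℤ), Integrable (fun z : Circle => c * (z : ℂ) ^ m - (z : ℂ) ^ n)
      (μ.restrict B) := fun c m n => (J c m).sub (I n)
    rw [integral_sub (K1 _ _ _) (K2 _ _ _),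
      integral_sub (I _) (J _ _), integral_sub (J _ _) (I _),
      integral_const_mul, integral_const_mul, ← hΦ k k B hB, ← hΦ k 0 B hB, ← hΦ 0 k B hB,
      ← hΦ 0 0 B hB]
    simp only [map_sub, map_smul, inner_sub_left, inner_sub_right, inner_smul_left,
      inner_smul_right, hc]
    linear_combination ⟪b 0, Φ.toFun B (b 0)⟫ * hw
  rw [e]
  refine (Complex.re_le_norm _).trans ?_
  refine norm_setIntegral_le_of_norm_le_const (measure_lt_top _ _) ?_
  intro z hz
  rw [norm_mul, sq]
  have h1 := circZPow z w k
  have h2 := circZPow z w (-(k : ℤ))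
  simp only [Int.cast_neg, Int.cast_natCast, abs_neg, Nat.abs_cast] at h1 h2
  have h3 : (k : ℝ) * ‖(z : ℂ) - w‖ ≤ k * δ :=
    mul_le_mul_of_nonneg_left (hδ z hz) (Nat.cast_nonneg k)
  exact mul_le_mul (h1.trans h3) (h2.trans h3) (norm_nonneg _) ((norm_nonneg _).trans (h1.trans h3))

theorem localBound
    (hΦ : ∀ k l : ℕ, ∀ B : Set Circle, MeasurableSet B →
      ⟪b k, Φ.toFun B (b l)⟫ = ∫ z in B, (z : ℂ) ^ ((k : ℤ) - (l : ℤ)) ∂μ)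
    (s : ℝ) (hs : 0 < s)
    (hM : ∀ B, MeasurableSet B → ∀ x, s * (⟪x, M.toFun B x⟫).re ≤ (⟪x, Φ.toFun B x⟫).re)
    (B : Set Circle) (hB : MeasurableSet B) (w : Circle) (δ : ℝ) (hδ0 : 0 ≤ δ)
    (hδ : ∀ z ∈ B, ‖(z : ℂ) - w‖ ≤ δ) (k l : ℕ) :
    ‖⟪b k, M.toFun B (b l)⟫ - (w : ℂ) ^ ((k : ℤ) - l) * ⟪b 0, M.toFun B (b 0)⟫‖
      ≤ s⁻¹ * (k + l) * δ * μ.real B := by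
  set u : ℕ → H := fun k => b k - (w : ℂ) ^ (-(k : ℤ)) • b 0 with hu
  have hpos : ∀ x, 0 ≤ (⟪x, M.toFun B x⟫).re := fun x =>
    (M.isPositive B hB).re_inner_nonneg_right x
  have hm0 : 0 ≤ μ.real B := measureReal_nonneg
  have h1 : ∀ k, (⟪u k, M.toFun B (u k)⟫).re ≤ s⁻¹ * ((k * δ) ^ 2 * μ.real B) := by
    intro k
    rw [← div_eq_inv_mul, le_div_iff₀ hs, mul_comm]
    exact (hM B hB _).trans (phiBound b μ Φ hΦ B hB w δ hδ k)
  have h2 : ∀ k, (⟪b k, M.toFun B (b k)⟫).re ≤ s⁻¹ * μ.real B := by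
    intro k
    rw [← div_eq_inv_mul, le_div_iff₀ hs, mul_comm]
    refine (hM B hB _).trans ?_
    rw [hΦ k k B hB]
    simp
  have hsi : 0 < s⁻¹ := inv_pos.2 hs
  have h3 : ∀ k l, ‖⟪u k, M.toFun B (b l)⟫‖ ≤ s⁻¹ * (k * δ) * μ.real B := by
    intro k l
    refine abs_le_of_sq_le_sq' ?_ (by positivity) |>.2
    refine (posCS _ (M.isPositive B hB) _ _).trans ?_
    refine (mul_le_mul (h1 k) (h2 l) (hpos _) (by positivity)).trans (le_of_eq ?_)
    ring
  have h4 : ∀ k l, ‖⟪b k, M.toFun B (u l)⟫‖ ≤ s⁻¹ * (l * δ) * μ.real B := by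
    intro k l
    rw [← (M.isPositive B hB).inner_left_eq_inner_right, norm_inner_symm]
    exact h3 l k
  have hc : (starRingEnd ℂ) ((w : ℂ) ^ (-(k : ℤ))) = (w : ℂ) ^ (k : ℤ) := by
    rw [map_zpow₀, ← Circle.coe_inv_eq_conj]; simp
  have e : ⟪b k, M.toFun B (b l)⟫ - (w : ℂ) ^ ((k : ℤ) - l) * ⟪b 0, M.toFun B (b 0)⟫
      = ⟪u k, M.toFun B (b l)⟫ + (w : ℂ) ^ (k : ℤ) * ⟪b 0, M.toFun B (u l)⟫ := by
    rw [sub_eq_add_neg (k : ℤ), zpow_add₀ (by simp)]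
    simp only [hu, map_sub, map_smul, inner_sub_left, inner_sub_right, inner_smul_left,
      inner_smul_right, hc]
    ring
  rw [e]
  refine (norm_add_le _ _).trans ?_
  rw [norm_mul, norm_zpow, Circle.norm_coe, one_zpow, one_mul]
  refine (add_le_add (h3 k l) (h4 0 l)).trans (le_of_eq ?_)
  ring

theorem matEq
    (hΦ : ∀ k l : ℕ, ∀ B : Set Circle, MeasurableSet B →
      ⟪b k, Φ.toFun B (b l)⟫ = ∫ z in B, (z : ℂ) ^ ((k : ℤ) - (l : ℤ)) ∂μ)
    (s : ℝ) (hs : 0 < s)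
    (hM : ∀ B, MeasurableSet B → ∀ x, s * (⟪x, M.toFun B x⟫).re ≤ (⟪x, Φ.toFun B x⟫).re)
    (m : Measure Circle) [IsFiniteMeasure m]
    (hm : ∀ B, MeasurableSet B → ((m.real B : ℝ) : ℂ) = ⟪b 0, M.toFun B (b 0)⟫)
    (k l : ℕ) (B : Set Circle) (hB : MeasurableSet B) :
    ⟪b k, M.toFun B (b l)⟫ = ∫ z in B, (z : ℂ) ^ ((k : ℤ) - (l : ℤ)) ∂m := by
  have hmμ : ∀ B, MeasurableSet B → m.real B ≤ s⁻¹ * μ.real B := by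
    intro B hB
    rw [← div_eq_inv_mul, le_div_iff₀ hs, mul_comm]
    have h := hM B hB (b 0)
    rw [← hm B hB, hΦ 0 0 B hB] at h
    simpa using h
  set C : ℝ := s⁻¹ * (k + l) + |(((k : ℤ) - l : ℤ) : ℝ)| * s⁻¹ with hC
  have hC0 : 0 ≤ C := by positivity
  -- local estimate
  have loc : ∀ (δ : ℝ), 0 < δ → ∀ A : Set Circle, MeasurableSet A →
      (∀ z ∈ A, ∀ w ∈ A, dist z w ≤ δ) →
      ‖⟪b k, M.toFun A (b l)⟫ - ∫ z in A, (z : ℂ) ^ ((k : ℤ) - (l : ℤ)) ∂m‖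
        ≤ C * δ * μ.real A := by
    intro δ hδ A hA hd
    rcases A.eq_empty_or_nonempty with rfl | ⟨w, hw⟩
    · simp [M.empty'_s11]
    have hd' : ∀ z ∈ A, ‖(z : ℂ) - w‖ ≤ δ := fun z hz => by
      have := hd z hz w hw
      rw [← dist_eq_norm]
      exact this
    have h1 := localBound b μ Φ M hΦ s hs hM A hA w δ hδ.le hd' k l
    have h2 : ‖∫ z in A, ((z : ℂ) ^ ((k : ℤ) - (l : ℤ)) - (w : ℂ) ^ ((k : ℤ) - (l : ℤ))) ∂m‖
        ≤ |(((k : ℤ) - l : ℤ) : ℝ)| * δ * m.real A := by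
      refine norm_setIntegral_le_of_norm_le_const (measure_lt_top _ _) ?_
      intro z hz
      exact (circZPow z w _).trans (mul_le_mul_of_nonneg_left (hd' z hz) (abs_nonneg _))
    have h3 : ∫ z in A, ((z : ℂ) ^ ((k : ℤ) - (l : ℤ)) - (w : ℂ) ^ ((k : ℤ) - (l : ℤ))) ∂m
        = ∫ z in A, (z : ℂ) ^ ((k : ℤ) - (l : ℤ)) ∂m
          - (w : ℂ) ^ ((k : ℤ) - l) * ⟪b 0, M.toFun A (b 0)⟫ := by
      rw [integral_sub (circInt _ _) (integrable_const _), ← hm A hA]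
      simp [mul_comm]
    rw [h3] at h2
    have h4 : |(((k : ℤ) - l : ℤ) : ℝ)| * δ * m.real A
        ≤ |(((k : ℤ) - l : ℤ) : ℝ)| * δ * (s⁻¹ * μ.real A) :=
      mul_le_mul_of_nonneg_left (hmμ A hA) (by positivity)
    have h5 := norm_sub_le (⟪b k, M.toFun A (b l)⟫ - (w : ℂ) ^ ((k : ℤ) - l) * ⟪b 0, M.toFun A (b 0)⟫)
      (∫ z in A, (z : ℂ) ^ ((k : ℤ) - (l : ℤ)) ∂m
          - (w : ℂ) ^ ((k : ℤ) - l) * ⟪b 0, M.toFun A (b 0)⟫)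
    rw [sub_sub_sub_cancel_right] at h5
    refine h5.trans ((add_le_add h1 (h2.trans h4)).trans (le_of_eq ?_))
    rw [hC]; ring
  have glob : ∀ δ : ℝ, 0 < δ →
      ‖⟪b k, M.toFun B (b l)⟫ - ∫ z in B, (z : ℂ) ^ ((k : ℤ) - (l : ℤ)) ∂m‖ ≤ C * δ := by
    intro δ hδ
    obtain ⟨As, hAm, hAb, hAd, hAu, hAdis⟩ :=
      SeparableSpace.exists_measurable_partition_diam_le Circle hδ
    have hBu : (⋃ n, B ∩ As n) = B := by rw [← inter_iUnion, hAu, inter_univ]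
    have hBm : ∀ n, MeasurableSet (B ∩ As n) := fun n => hB.inter (hAm n)
    have hBd : Pairwise (Function.onFun Disjoint (fun n => B ∩ As n)) := fun i j hij =>
      (hAdis hij).mono inter_subset_right inter_subset_right
    have S1 := M.m_iUnion _ hBm hBd (b k) (b l)
    have S2 := hasSum_integral_iUnion (μ := m) hBm hBd
      (circInt m ((k : ℤ) - (l : ℤ))).integrableOn
    have S3 := hasSum_integral_iUnion (μ := μ) (f := fun _ => (1 : ℝ)) hBm hBd
      (integrable_const _).integrableOn
    rw [hBu] at S1 S2 S3
    simp only [integral_const, smul_eq_mul, mul_one, measureReal_restrict_apply_univ] at S3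
    have S4 := S1.sub S2
    have S5 := S3.mul_left (C * δ)
    have : ‖⟪b k, M.toFun B (b l)⟫ - ∫ z in B, (z : ℂ) ^ ((k : ℤ) - (l : ℤ)) ∂m‖
        ≤ C * δ * μ.real B := by
      rw [← S4.tsum_eq]
      refine tsum_of_norm_bounded S5 ?_
      intro n
      refine loc δ hδ _ (hBm n) ?_
      intro z hz w hw
      exact (Metric.dist_le_diam_of_mem (hAb n) hz.2 hw.2).trans (hAd n)
    refine this.trans ?_
    have h1 : μ.real B ≤ 1 := measureReal_le_one
    exact mul_le_of_le_one_right (by positivity) h1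
  have hz : ‖⟪b k, M.toFun B (b l)⟫ - ∫ z in B, (z : ℂ) ^ ((k : ℤ) - (l : ℤ)) ∂m‖ ≤ 0 := by
    refine le_of_forall_pos_le_add fun ε hε => ?_
    have := glob (ε / (C + 1)) (by positivity)
    refine this.trans ?_
    rw [zero_add, mul_div_assoc', div_le_iff₀ (by positivity)]
    nlinarith
  exact sub_eq_zero.1 (norm_le_zero_iff.1 hz)

theorem povmEq
    (hΦ : ∀ k l : ℕ, ∀ B : Set Circle, MeasurableSet B →
      ⟪b k, Φ.toFun B (b l)⟫ = ∫ z in B, (z : ℂ) ^ ((k : ℤ) - (l : ℤ)) ∂μ)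
    (s : ℝ) (hs : 0 < s)
    (hM : ∀ B, MeasurableSet B → ∀ x, s * (⟪x, M.toFun B x⟫).re ≤ (⟪x, Φ.toFun B x⟫).re)
    (B : Set Circle) (hB : MeasurableSet B) : M.toFun B = Φ.toFun B := by
  obtain ⟨m, hmf, hm⟩ := M.exMeas (b 0)
  have key := matEq b μ Φ M hΦ s hs hM m hm
  have hk : ∀ k l : ℕ, ∫ z : Circle, (z : ℂ) ^ ((k : ℤ) - l) ∂m
      = ∫ z : Circle, (z : ℂ) ^ ((k : ℤ) - l) ∂μ := by
    intro k l
    have h1 := key k l univ MeasurableSet.univ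
    have h2 := hΦ k l univ MeasurableSet.univ
    rw [setIntegral_univ, M.normalized] at h1
    rw [setIntegral_univ, Φ.normalized] at h2
    exact h1.symm.trans h2
  have hmμ : m = μ := by
    refine circExt m μ fun n => ?_
    obtain ⟨k, rfl | rfl⟩ := n.eq_nat_or_neg
    · simpa using hk k 0
    · simpa using hk 0 k
  subst hmμ
  have hd : Dense ((Submodule.span ℂ (range b) : Submodule ℂ H) : Set H) := by
    rw [Submodule.dense_iff_topologicalClosure_eq_top]
    exact b.dense_span
  refine ContinuousLinearMap.ext_on hd ?_
  rintro _ ⟨l, rfl⟩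
  apply b.repr.injective
  ext k
  rw [b.repr_apply_apply, b.repr_apply_apply, key k l B hB, hΦ k l B hB]

end

theorem stmt11
    (H : Type*) [NormedAddCommGroup H] [InnerProductSpace ℂ H] [CompleteSpace H]
    -- an orthonormal basis `{e_k : k ∈ ℕ}` of `H`
    (b : HilbertBasis ℕ ℂ H)
    -- the normalized Haar measure on `𝕋`
    (μ : Measure Circle) (hHaar : μ.IsHaarMeasure) (hProb : IsProbabilityMeasure μ)
    -- the canonical phase observable
    (Φ : POVM Circle H)
    (hΦ : ∀ k l : ℕ, ∀ B : Set Circle, MeasurableSet B →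
      ⟪b k, Φ.toFun B (b l)⟫ = ∫ z in B, (z : ℂ) ^ ((k : ℤ) - (l : ℤ)) ∂μ) :
    -- `Φ` is an extreme point of the convex set of ALL POVMs on `(𝕋, ℬ(𝕋))` acting on `H`
    ∀ M₁ M₂ : POVM Circle H, ∀ t : ℝ, 0 < t → t < 1 →
      (∀ B : Set Circle, MeasurableSet B →
        Φ.toFun B = (t : ℂ) • M₁.toFun B + ((1 - t : ℝ) : ℂ) • M₂.toFun B) →
      ∀ B : Set Circle, MeasurableSet B →
        M₁.toFun B = Φ.toFun B ∧ M₂.toFun B = Φ.toFun B := by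
  intro M₁ M₂ t ht0 ht1 hsum
  have hin : ∀ B, MeasurableSet B → ∀ x, (⟪x, Φ.toFun B x⟫).re
      = t * (⟪x, M₁.toFun B x⟫).re + (1 - t) * (⟪x, M₂.toFun B x⟫).re := by
    intro B hB x
    rw [hsum B hB]
    simp only [ContinuousLinearMap.add_apply, ContinuousLinearMap.smul_apply, inner_add_right,
      inner_smul_right, Complex.add_re, Complex.re_ofReal_mul]
  have h1 : ∀ B, MeasurableSet B → ∀ x, 0 ≤ (⟪x, M₁.toFun B x⟫).re := fun B hB x =>
    (M₁.isPositive B hB).re_inner_nonneg_right x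
  have h2 : ∀ B, MeasurableSet B → ∀ x, 0 ≤ (⟪x, M₂.toFun B x⟫).re := fun B hB x =>
    (M₂.isPositive B hB).re_inner_nonneg_right x
  intro B hB
  refine ⟨povmEq b μ Φ M₁ hΦ t ht0 ?_ B hB, povmEq b μ Φ M₂ hΦ (1 - t) (by linarith) ?_ B hB⟩
  · intro B hB x
    rw [hin B hB x]
    have := mul_nonneg (sub_nonneg.2 ht1.le) (h2 B hB x)
    linarith
  · intro B hB x
    rw [hin B hB x]
    have := mul_nonneg ht0.le (h1 B hB x)
    linarith
end
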